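/- arXiv:2503.06694 — 2 statements merged into one kernel-verified Lean document; each statement's English description precedes it below -/
import Mathlib

section
/- Let L be a ℤ-graded Lie conformal algebra of class 𝒱 with deg p_{−1,1}(∂) = 2. Then L is isomorphic, as a Lie conformal algebra, to ECL(s) for some s ∈ ℂ. -/
open scoped BigOperators Classical ENNReal
open Polynomial

noncomputable section

/-- A Lie conformal algebra over `ℂ`, encoded via its `n`-th products
`a_(n) b` and the operator `∂ = D`.  The `λ`-bracket is
`[a_λ b] = ∑ₙ (λⁿ/n!) • (a_(n) b)`. -/
structure LieConformalAlgebra (L : Type) [AddCommGroup L] [Module ℂ L] : Type where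
  D : L →ₗ[ℂ] L
  prd : ℕ → L →ₗ[ℂ] L →ₗ[ℂ] L
  bound : ∀ a b : L, ∃ N : ℕ, ∀ n : ℕ, N ≤ n → prd n a b = 0
  sesq : ∀ (n : ℕ) (a b : L), prd n (D a) b = (-(n : ℂ)) • prd (n - 1) a b
  sesq' : ∀ (n : ℕ) (a b : L),
    prd n a (D b) = D (prd n a b) + (n : ℂ) • prd (n - 1) a b
  skew : ∀ (n : ℕ) (a b : L),
    prd n a b
      = - ∑ᶠ j : ℕ, ((-1 : ℂ) ^ (n + j) * ((Nat.factorial j : ℂ))⁻¹) • (⇑D)^[j] (prd (n + j) b a)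
  jacobi : ∀ (m n : ℕ) (a b c : L),
    prd m a (prd n b c) - prd n b (prd m a c)
      = ∑ j ∈ Finset.range (m + 1), (Nat.choose m j : ℂ) • prd (m + n - j) (prd j a b) c

namespace LieConformalAlgebra

variable {L : Type} [AddCommGroup L] [Module ℂ L]

/-- The action of a polynomial `q(∂) ∈ ℂ[∂]` on an element. -/
def applyP (C : LieConformalAlgebra L) (q : Polynomial ℂ) (x : L) : L :=
  q.sum fun k c => c • (⇑C.D)^[k] x

/-- `[a_λ b] = p(∂, λ) • t`, where `p ∈ ℂ[∂][λ]` is a two-variable polynomial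
(outer variable `λ`, inner variable `∂`). -/
def BracketEq (C : LieConformalAlgebra L) (a b t : L) (p : Polynomial (Polynomial ℂ)) : Prop :=
  ∀ n : ℕ, C.prd n a b = (Nat.factorial n : ℂ) • C.applyP (p.coeff n) t

def IsSubalgebra (C : LieConformalAlgebra L) (N : Submodule ℂ L) : Prop :=
  (∀ x ∈ N, C.D x ∈ N) ∧ ∀ n : ℕ, ∀ a ∈ N, ∀ b ∈ N, C.prd n a b ∈ N

def IsIdeal (C : LieConformalAlgebra L) (N : Submodule ℂ L) : Prop :=
  (∀ x ∈ N, C.D x ∈ N) ∧ ∀ (n : ℕ) (a : L), ∀ b ∈ N, C.prd n a b ∈ N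

/-- `L` is finitely generated as a Lie conformal algebra (finite type). -/
def FiniteType (C : LieConformalAlgebra L) : Prop :=
  ∃ s : Finset L, ∀ N : Submodule ℂ L, C.IsSubalgebra N → (s : Set L) ⊆ (N : Set L) → N = ⊤

/-- `L` is finitely generated as a `ℂ[∂]`-module. -/
def FGPolyModule (C : LieConformalAlgebra L) : Prop :=
  ∃ s : Finset L, ∀ N : Submodule ℂ L, (∀ x ∈ N, C.D x ∈ N) → (s : Set L) ⊆ (N : Set L) → N = ⊤

/-- Iterated adjoint action `a₁_(k₁)(a₂_(k₂)(⋯ x))`. -/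
def iterPrd (C : LieConformalAlgebra L) : List (L × ℕ) → L → L
  | [], x => x
  | (a, k) :: t, x => C.prd k a (iterPrd C t x)

/-- The `ℂ[∂]`-rank of the submodule `N` is at most `r`:
any `r+1` elements of `N` are `ℂ[∂]`-linearly dependent. -/
def polyRankLE (C : LieConformalAlgebra L) (N : Submodule ℂ L) (r : ℕ) : Prop :=
  ∀ v : Fin (r + 1) → L, (∀ k, v k ∈ N) →
    ∃ q : Fin (r + 1) → Polynomial ℂ, (∃ k, q k ≠ 0) ∧ ∑ k, C.applyP (q k) (v k) = 0

/-- The family `v` is a free `ℂ[∂]`-basis of `L`. -/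
def IsFreePolyBasis (C : LieConformalAlgebra L) {ι : Type} (v : ι → L) : Prop :=
  LinearIndependent ℂ (fun q : ι × ℕ => (⇑C.D)^[q.2] (v q.1)) ∧
  Submodule.span ℂ (Set.range fun q : ι × ℕ => (⇑C.D)^[q.2] (v q.1)) = ⊤

/-- `[U_λ V]`: the `ℂ`-span of all `u_(n) v`. -/
def bspan (C : LieConformalAlgebra L) (U V : Set L) : Submodule ℂ L :=
  Submodule.span ℂ {x : L | ∃ (n : ℕ) (u : L) (w : L), u ∈ U ∧ w ∈ V ∧ x = C.prd n u w}

end LieConformalAlgebra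

/-- `∂` as an element of `ℂ[∂][λ]`. -/
def Pd : Polynomial (Polynomial ℂ) := Polynomial.C Polynomial.X
/-- `λ` as an element of `ℂ[∂][λ]`. -/
def Pl : Polynomial (Polynomial ℂ) := Polynomial.X
/-- a constant in `ℂ[∂][λ]`. -/
def Pc (a : ℂ) : Polynomial (Polynomial ℂ) := Polynomial.C (Polynomial.C a)

/-- Total degree of a two-variable polynomial in `ℂ[∂][λ]`. -/
def tdeg (p : Polynomial (Polynomial ℂ)) : ℕ :=
  p.support.sup fun n => n + (p.coeff n).natDegree

section ModelPolynomials

/-- structure polynomials of `𝒱(s)` -/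
def pV (s : ℂ) (i j : ℤ) : Polynomial (Polynomial ℂ) :=
  Pd + Pc 2 * Pl + Pc (s * ((i : ℂ) - (j : ℂ)))

/-- structure polynomials of `CL₁(s)` -/
def pCL1 (s : ℂ) (i j : ℤ) : Polynomial (Polynomial ℂ) :=
  Pc ((i : ℂ) + 1) * Pd + Pc ((i : ℂ) + (j : ℂ) + 2) * Pl + Pc (s * ((i : ℂ) - (j : ℂ)))

/-- structure polynomials of `CL₂(b,s)` -/
def pCL2 (b s : ℂ) (i j : ℤ) : Polynomial (Polynomial ℂ) :=
  Pc ((i : ℂ) + b) * Pd + Pc ((i : ℂ) + (j : ℂ) + 2 * b) * Pl + Pc (s * ((i : ℂ) - (j : ℂ)))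

/-- structure polynomials of `SCL₂(b,s)` (for `2b ∈ ℤ`), w.r.t. the basis
`L'ᵢ = Lᵢ (i ≠ -2b)`, `L'_{-2b} = (∂+2s)L_{-2b}` of the corresponding graded
subalgebra of `CL₂(b,s)`. -/
def pSCL2 (b s : ℂ) (i j : ℤ) : Polynomial (Polynomial ℂ) :=
  (if (i : ℂ) = -(2 * b) then Pc (2 * s) - Pl else 1) *
  (if (j : ℂ) = -(2 * b) then Pd + Pl + Pc (2 * s) else 1) *
  (if (i : ℂ) + (j : ℂ) = -(2 * b) then Pc ((i : ℂ) + b) else pCL2 b s i j)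

/-- structure polynomials of `CL₃(s)` -/
def pCL3 (s : ℂ) (i j : ℤ) : Polynomial (Polynomial ℂ) :=
  if i + j = 0 then Pc (i : ℂ) * (Pd + Pc s)
  else if i = 0 then Pc (-(j : ℂ)) * (Pc (2 * s) - Pl)
  else if j = 0 then Pc (i : ℂ) * (Pd + Pl + Pc (2 * s))
  else Pc (i : ℂ) * Pd + Pc ((i : ℂ) + (j : ℂ)) * Pl + Pc (s * ((i : ℂ) - (j : ℂ)))

/-- structure polynomials of `ECL(s)` -/
def pECL (s : ℂ) (i j : ℤ) : Polynomial (Polynomial ℂ) :=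
  if i + j = 0 then Pc (i : ℂ) * (Pd + Pc s) * (Pd + Pc (2 * s))
  else if i = 0 then Pc (-(j : ℂ))
  else if j = 0 then Pc (i : ℂ)
  else Pc (i : ℂ) * Pd + Pc ((i : ℂ) + (j : ℂ)) * Pl + Pc (s * ((i : ℂ) - (j : ℂ)))

/-- structure polynomials of `M(1)` (indices `≥ -1`, completed by skew-symmetry) -/
def pM1 (i j : ℤ) : Polynomial (Polynomial ℂ) :=
  if i = 1 ∧ j = 1 then Pd + Pc 2 * Pl
  else if i = -1 ∧ 1 ≤ j then Pc (((j : ℂ) + 1) * ((j : ℂ) - 2) / 2)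
  else if j = -1 ∧ 1 ≤ i then Pc (-(((i : ℂ) + 1) * ((i : ℂ) - 2) / 2))
  else if i = 0 then Pc (-(j : ℂ))
  else if j = 0 then Pc (i : ℂ)
  else if i = 1 ∧ 2 ≤ j then 1
  else if j = 1 ∧ 2 ≤ i then -1
  else 0

/-- structure polynomials of `M(2)` (completed by skew-symmetry) -/
def pM2 (i j : ℤ) : Polynomial (Polynomial ℂ) :=
  if i = 1 ∧ j = 1 then Pd + Pc 2 * Pl
  else if i = -1 ∧ j = -1 then Pd + Pc 2 * Pl
  else if i = 0 then Pc (-(j : ℂ))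
  else if j = 0 then Pc (i : ℂ)
  else if i = -1 ∧ 1 ≤ j then Pc (((j : ℂ) + 1) * ((j : ℂ) - 2) / 2)
  else if j = -1 ∧ 1 ≤ i then Pc (-(((i : ℂ) + 1) * ((i : ℂ) - 2) / 2))
  else if i = 1 ∧ j ≤ -2 then Pc (((j : ℂ) - 1) * ((j : ℂ) + 2) / 2)
  else if j = 1 ∧ i ≤ -2 then Pc (-(((i : ℂ) - 1) * ((i : ℂ) + 2) / 2))
  else if i = -1 ∧ j ≤ -2 then 1
  else if j = -1 ∧ i ≤ -2 then -1
  else if i = 1 ∧ 2 ≤ j then 1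
  else if j = 1 ∧ 2 ≤ i then -1
  else 0

end ModelPolynomials

namespace LieConformalAlgebra

variable {L : Type} [AddCommGroup L] [Module ℂ L]

/-- `C` is isomorphic to the Virasoro Lie conformal algebra. -/
def IsVir (C : LieConformalAlgebra L) : Prop :=
  ∃ e : L, C.IsFreePolyBasis (fun _ : Unit => e) ∧ C.BracketEq e e e (Pd + Pc 2 * Pl)

/-- `C` is isomorphic to the loop Virasoro Lie conformal algebra `𝒱(s)`. -/
def IsV (C : LieConformalAlgebra L) (s : ℂ) : Prop :=
  ∃ v : ℤ → L, C.IsFreePolyBasis v ∧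
    ∀ i j : ℤ, C.BracketEq (v i) (v j) (v (i + j)) (pV s i j)

/-- `C` is isomorphic to `CL₁(s)`. -/
def IsCL1 (C : LieConformalAlgebra L) (s : ℂ) : Prop :=
  ∃ v : ℤ → L, C.IsFreePolyBasis (fun q : {i : ℤ // -1 ≤ i} => v q.1) ∧
    ∀ i j : ℤ, -1 ≤ i → -1 ≤ j →
      C.BracketEq (v i) (v j) (if -1 ≤ i + j then v (i + j) else 0) (pCL1 s i j)

/-- `C` is isomorphic to `CL₂(b,s)`. -/
def IsCL2 (C : LieConformalAlgebra L) (b s : ℂ) : Prop :=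
  ∃ v : ℤ → L, C.IsFreePolyBasis v ∧
    ∀ i j : ℤ, C.BracketEq (v i) (v j) (v (i + j)) (pCL2 b s i j)

/-- `C` is isomorphic to `SCL₂(b,s)`. -/
def IsSCL2 (C : LieConformalAlgebra L) (b s : ℂ) : Prop :=
  ∃ v : ℤ → L, C.IsFreePolyBasis v ∧
    ∀ i j : ℤ, C.BracketEq (v i) (v j) (v (i + j)) (pSCL2 b s i j)

/-- `C` is isomorphic to `CL₃(s)`. -/
def IsCL3 (C : LieConformalAlgebra L) (s : ℂ) : Prop :=
  ∃ v : ℤ → L, C.IsFreePolyBasis v ∧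
    ∀ i j : ℤ, C.BracketEq (v i) (v j) (v (i + j)) (pCL3 s i j)

/-- `C` is isomorphic to `ECL(s)`. -/
def IsECL (C : LieConformalAlgebra L) (s : ℂ) : Prop :=
  ∃ v : ℤ → L, C.IsFreePolyBasis v ∧
    ∀ i j : ℤ, C.BracketEq (v i) (v j) (v (i + j)) (pECL s i j)

/-- `C` is isomorphic to `M(1)`. -/
def IsM1 (C : LieConformalAlgebra L) : Prop :=
  ∃ v : ℤ → L, C.IsFreePolyBasis (fun q : {i : ℤ // -1 ≤ i} => v q.1) ∧
    ∀ i j : ℤ, -1 ≤ i → -1 ≤ j →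
      C.BracketEq (v i) (v j) (if -1 ≤ i + j then v (i + j) else 0) (pM1 i j)

/-- `C` is isomorphic to `M(2)`. -/
def IsM2 (C : LieConformalAlgebra L) : Prop :=
  ∃ v : ℤ → L, C.IsFreePolyBasis v ∧
    ∀ i j : ℤ, C.BracketEq (v i) (v j) (v (i + j)) (pM2 i j)

/-- `C` is isomorphic to the current Lie conformal algebra `Cur 𝔤`. -/
def IsCur (C : LieConformalAlgebra L) (g : Type) [LieRing g] [LieAlgebra ℂ g] : Prop :=
  ∃ φ : g →ₗ[ℂ] L,
    Function.Bijective (fun f : ℕ →₀ g => f.sum fun k x => (⇑C.D)^[k] (φ x)) ∧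
    (∀ x y : g, C.prd 0 (φ x) (φ y) = φ ⁅x, y⁆) ∧
    ∀ n : ℕ, 1 ≤ n → ∀ x y : g, C.prd n (φ x) (φ y) = 0

/-- `C ≅ Cur sl(2,ℂ)`. -/
def IsCurSl2 (C : LieConformalAlgebra L) : Prop :=
  C.IsCur ↥(LieAlgebra.SpecialLinear.sl (Fin 2) ℂ)

/-- `C ≅ Cur 𝒲`, `𝒲` the Witt algebra (basis `wᵢ`, `[wᵢ,wⱼ] = (j-i)w_{i+j}`). -/
def IsCurWitt (C : LieConformalAlgebra L) : Prop :=
  ∃ v : ℤ → L, C.IsFreePolyBasis v ∧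
    (∀ i j : ℤ, C.prd 0 (v i) (v j) = (((j : ℂ) - (i : ℂ))) • v (i + j)) ∧
    ∀ n : ℕ, 1 ≤ n → ∀ i j : ℤ, C.prd n (v i) (v j) = 0

/-- `C ≅ Cur 𝒲₁`, `𝒲₁` spanned by the `wᵢ`, `i ≥ -1`. -/
def IsCurWitt1 (C : LieConformalAlgebra L) : Prop :=
  ∃ v : ℤ → L, C.IsFreePolyBasis (fun q : {i : ℤ // -1 ≤ i} => v q.1) ∧
    (∀ i j : ℤ, -1 ≤ i → -1 ≤ j →
      C.prd 0 (v i) (v j) = (((j : ℂ) - (i : ℂ))) • (if -1 ≤ i + j then v (i + j) else 0)) ∧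
    ∀ n : ℕ, 1 ≤ n → ∀ i j : ℤ, -1 ≤ i → -1 ≤ j → C.prd n (v i) (v j) = 0

end LieConformalAlgebra

/-- A `ℤ`-graded Lie conformal algebra. -/
structure GradedLCA (L : Type) [AddCommGroup L] [Module ℂ L]
    extends LieConformalAlgebra L where
  G : ℤ → Submodule ℂ L
  internal : DirectSum.IsInternal G
  dGrade : ∀ i : ℤ, ∀ x ∈ G i, D x ∈ G i
  prdGrade : ∀ (i j : ℤ) (n : ℕ), ∀ a ∈ G i, ∀ b ∈ G j, prd n a b ∈ G (i + j)

namespace GradedLCA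

variable {L : Type} [AddCommGroup L] [Module ℂ L]

/-- A graded ideal: an ideal generated by homogeneous elements. -/
def IsGradedIdeal (C : GradedLCA L) (N : Submodule ℂ L) : Prop :=
  C.toLieConformalAlgebra.IsIdeal N ∧ (⨆ i : ℤ, N ⊓ C.G i) = N

/-- `L` is simple graded: nonzero bracket, and the only graded ideals are `⊥` and `⊤`. -/
def IsSimpleGraded (C : GradedLCA L) : Prop :=
  (∃ (n : ℕ) (a b : L), C.prd n a b ≠ 0) ∧
  ∀ N : Submodule ℂ L, C.IsGradedIdeal N → N = ⊥ ∨ N = ⊤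

/-- `[L_λ L] = L`. -/
def Perfect (C : GradedLCA L) : Prop :=
  Submodule.span ℂ {x : L | ∃ (n : ℕ) (a b : L), x = C.prd n a b} = ⊤

/-- Each component `L_i` is a nilpotent `L₀`-module under the adjoint action. -/
def Rootless (C : GradedLCA L) : Prop :=
  ∀ i : ℤ, ∃ n : ℕ, 1 ≤ n ∧ ∀ l : List (L × ℕ), l.length = n →
    (∀ q ∈ l, q.1 ∈ C.G 0) → ∀ x ∈ C.G i, C.toLieConformalAlgebra.iterPrd l x = 0

/-- The ranks of the components are uniformly bounded. -/
def UniformlyBounded (C : GradedLCA L) : Prop :=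
  ∃ N : ℕ, 1 ≤ N ∧ ∀ i : ℤ, C.toLieConformalAlgebra.polyRankLE (C.G i) N

end GradedLCA

/-- A module over a Lie conformal algebra, encoded via the `n`-th actions. -/
structure LCAModule {L : Type} [AddCommGroup L] [Module ℂ L] (C : LieConformalAlgebra L)
    (M : Type) [AddCommGroup M] [Module ℂ M] : Type where
  DM : M →ₗ[ℂ] M
  act : ℕ → L →ₗ[ℂ] M →ₗ[ℂ] M
  bound : ∀ (a : L) (m : M), ∃ N : ℕ, ∀ n : ℕ, N ≤ n → act n a m = 0
  sesq : ∀ (n : ℕ) (a : L) (m : M), act n (C.D a) m = (-(n : ℂ)) • act (n - 1) a m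
  sesq' : ∀ (n : ℕ) (a : L) (m : M),
    act n a (DM m) = DM (act n a m) + (n : ℂ) • act (n - 1) a m
  comm : ∀ (p q : ℕ) (a b : L) (m : M),
    act p a (act q b m) - act q b (act p a m)
      = ∑ j ∈ Finset.range (p + 1), (Nat.choose p j : ℂ) • act (p + q - j) (C.prd j a b) m

namespace LCAModule

variable {L : Type} [AddCommGroup L] [Module ℂ L] {C : LieConformalAlgebra L}
variable {M : Type} [AddCommGroup M] [Module ℂ M]

/-- Iterated action `a₁_(k₁)(a₂_(k₂)(⋯ m))`. -/
def iterAct (ρ : LCAModule C M) : List (L × ℕ) → M → M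
  | [], m => m
  | (a, k) :: t, m => ρ.act k a (iterAct ρ t m)

/-- `N` is an `L`-submodule of `M`. -/
def IsSub (ρ : LCAModule C M) (N : Submodule ℂ M) : Prop :=
  (∀ m ∈ N, ρ.DM m ∈ N) ∧ ∀ (n : ℕ) (a : L), ∀ m ∈ N, ρ.act n a m ∈ N

/-- `M` is a nilpotent module. -/
def Nilpotent (ρ : LCAModule C M) : Prop :=
  ∃ n : ℕ, 1 ≤ n ∧ ∀ l : List (L × ℕ), l.length = n → ∀ m : M, ρ.iterAct l m = 0

/-- `M` is finitely generated as an `L`-module. -/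
def FG (ρ : LCAModule C M) : Prop :=
  ∃ s : Finset M, ∀ N : Submodule ℂ M, ρ.IsSub N → (s : Set M) ⊆ (N : Set M) → N = ⊤

/-- The `L`-submodule `N` is finitely generated as an `L`-module. -/
def FGIn (ρ : LCAModule C M) (N : Submodule ℂ M) : Prop :=
  ∃ s : Finset M, (s : Set M) ⊆ (N : Set M) ∧
    ∀ P : Submodule ℂ M, ρ.IsSub P → (s : Set M) ⊆ (P : Set M) → N ≤ P

/-- `M` is finitely generated as a `ℂ[∂]`-module. -/
def FGPoly (ρ : LCAModule C M) : Prop :=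
  ∃ s : Finset M, ∀ N : Submodule ℂ M, (∀ m ∈ N, ρ.DM m ∈ N) → (s : Set M) ⊆ (N : Set M) → N = ⊤

end LCAModule

/-- A family is `ℂ[∂]`-linearly independent. -/
def polyIndep {M : Type} [AddCommGroup M] [Module ℂ M] (DM : M →ₗ[ℂ] M)
    {r : ℕ} (v : Fin r → M) : Prop :=
  ∀ q : Fin r → Polynomial ℂ,
    (∑ k, (q k).sum fun t c => c • (⇑DM)^[t] (v k)) = 0 → ∀ k, q k = 0

/-- The `ℂ[∂]`-rank of a submodule, in `ℕ∞`. -/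
def polyRank {M : Type} [AddCommGroup M] [Module ℂ M] (DM : M →ₗ[ℂ] M)
    (N : Submodule ℂ M) : ℕ∞ :=
  ⨆ r ∈ {r : ℕ | ∃ v : Fin r → M, (∀ k, v k ∈ N) ∧ polyIndep DM v}, (r : ℕ∞)

/-- A graded module over a `ℤ`-graded Lie conformal algebra. -/
structure GradedLCAModule {L : Type} [AddCommGroup L] [Module ℂ L] (C : GradedLCA L)
    (M : Type) [AddCommGroup M] [Module ℂ M]
    extends LCAModule C.toLieConformalAlgebra M where
  GM : ℤ → Submodule ℂ M
  internal : DirectSum.IsInternal GM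
  dGrade : ∀ i : ℤ, ∀ m ∈ GM i, DM m ∈ GM i
  actGrade : ∀ (i j : ℤ) (n : ℕ), ∀ a ∈ C.G i, ∀ m ∈ GM j, act n a m ∈ GM (i + j)

namespace GradedLCAModule

variable {L : Type} [AddCommGroup L] [Module ℂ L] {C : GradedLCA L}
variable {M : Type} [AddCommGroup M] [Module ℂ M]

/-- `Mⁿ = ⊕_{|i| ≤ n} M_i`. -/
def seg (ρ : GradedLCAModule C M) (n : ℕ) : Submodule ℂ M :=
  ⨆ i : ℤ, ⨆ _ : |i| ≤ (n : ℤ), ρ.GM i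

/-- `e(M) = liminf (1/n) rank_{ℂ[∂]} Mⁿ`. -/
def eM (ρ : GradedLCAModule C M) : ℝ≥0∞ :=
  Filter.atTop.liminf fun n : ℕ => (polyRank ρ.DM (ρ.seg n) : ℝ≥0∞) / (n : ℝ≥0∞)

/-- Each `M_i` is a nilpotent `L₀`-module. -/
def Weightless (ρ : GradedLCAModule C M) : Prop :=
  ∀ i : ℤ, ∃ n : ℕ, 1 ≤ n ∧ ∀ l : List (L × ℕ), l.length = n →
    (∀ q ∈ l, q.1 ∈ C.G 0) → ∀ m ∈ ρ.GM i, ρ.toLCAModule.iterAct l m = 0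

/-- The submodule `I(M)` generated by all homogeneous `v` lying in the span of
the iterated actions of `L` on `v`. -/
def IM (ρ : GradedLCAModule C M) : Submodule ℂ M :=
  sInf {N : Submodule ℂ M | ρ.toLCAModule.IsSub N ∧
    {v : M | (∃ i : ℤ, v ∈ ρ.GM i) ∧
      v ∈ Submodule.span ℂ
        {w : M | ∃ l : List (L × ℕ), 1 ≤ l.length ∧ w = ρ.toLCAModule.iterAct l v}} ⊆ N}

end GradedLCAModule

/-- The structure context for graded Lie conformal algebras all of whose
nonzero components are free of rank one over `ℂ[∂]`: fixed homogeneous bases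
`bas i` and structure polynomials `sp i j ∈ ℂ[∂][λ]`, with `0 ∈ Supp(L)` and
`L₀` abelian. -/
structure RankOneContext (L : Type) [AddCommGroup L] [Module ℂ L]
    extends GradedLCA L where
  bas : ℤ → L
  sp : ℤ → ℤ → Polynomial (Polynomial ℂ)
  bas_mem : ∀ i : ℤ, bas i ∈ G i
  bas_zero : ∀ i : ℤ, G i = ⊥ → bas i = 0
  bas_indep : ∀ i : ℤ, G i ≠ ⊥ → LinearIndependent ℂ fun k : ℕ => (⇑D)^[k] (bas i)
  bas_span : ∀ i : ℤ, G i ≠ ⊥ →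
    G i = Submodule.span ℂ (Set.range fun k : ℕ => (⇑D)^[k] (bas i))
  sp_brkt : ∀ (i j : ℤ) (n : ℕ),
    prd n (bas i) (bas j)
      = (Nat.factorial n : ℂ) • (((sp i j).coeff n).sum fun k c => c • (⇑D)^[k] (bas (i + j)))
  sp_zero : ∀ i j : ℤ, (G i = ⊥ ∨ G j = ⊥ ∨ G (i + j) = ⊥) → sp i j = 0
  supp_zero : G 0 ≠ ⊥
  abelian0 : ∀ n : ℕ, ∀ x ∈ G 0, ∀ y ∈ G 0, prd n x y = 0

/-- A Lie conformal algebra of class `𝒱`. -/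
structure ClassV (L : Type) [AddCommGroup L] [Module ℂ L]
    extends RankOneContext L where
  supp_one : G 1 ≠ ⊥
  supp_negone : G (-1) ≠ ⊥
  genV : ∀ N : Submodule ℂ L, (∀ x ∈ N, D x ∈ N) →
    (∀ n : ℕ, ∀ a ∈ N, ∀ b ∈ N, prd n a b ∈ N) →
    G 1 ≤ N → G 0 ≤ N → G (-1) ≤ N → N = ⊤
  ne_m11 : sp (-1) 1 ≠ 0
  ne_01 : sp 0 1 ≠ 0


/-! ### Generating functions of the products -/

namespace ECLProof

theorem sum_tri {M : Type*} [AddCommMonoid M] (N : ℕ) (f : ℕ → ℕ → M)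
    (h : ∀ i j, (N ≤ i ∨ N ≤ j) → f i j = 0) :
    ∑ m ∈ Finset.range (2 * N), ∑ p ∈ Finset.HasAntidiagonal.antidiagonal m, f p.1 p.2
      = ∑ i ∈ Finset.range N, ∑ j ∈ Finset.range N, f i j := by
  rw [← Finset.sum_product' (Finset.range N) (Finset.range N) f]
  rw [← Finset.sum_fiberwise_of_maps_to (s := Finset.range N ×ˢ Finset.range N)
    (t := Finset.range (2 * N)) (g := fun p => p.1 + p.2)]
  · apply Finset.sum_congr rfl
    intro m hm
    symm
    apply Finset.sum_subset
    · intro p hp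
      simp only [Finset.mem_filter] at hp
      simpa using hp.2
    · intro p hp hp'
      simp only [Finset.mem_filter, Finset.mem_product, Finset.mem_range] at hp'
      apply h
      have := Finset.HasAntidiagonal.mem_antidiagonal.1 hp
      by_contra hc
      push Not at hc
      exact hp' ⟨hc, this⟩
  · intro p hp
    simp only [Finset.mem_product, Finset.mem_range] at hp ⊢
    omega

variable {L : Type} [AddCommGroup L] [Module ℂ L]

/-- evaluated bracket -/
def br (C : LieConformalAlgebra L) (y : ℂ) (a b : L) : L :=
  ∑ᶠ n : ℕ, (y ^ n * ((Nat.factorial n : ℂ))⁻¹) • C.prd n a b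

theorem br_eq (C : LieConformalAlgebra L) (y : ℂ) (a b : L) (N : ℕ)
    (h : ∀ n, N ≤ n → C.prd n a b = 0) :
    br C y a b = ∑ n ∈ Finset.range N, (y ^ n * ((Nat.factorial n : ℂ))⁻¹) • C.prd n a b := by
  unfold br
  apply finsum_eq_sum_of_support_subset
  intro n hn
  simp only [Function.mem_support] at hn
  simp only [Finset.coe_range, Set.mem_Iio]
  by_contra hc
  exact hn (by rw [h n (by omega), smul_zero])

theorem br_add_left (C : LieConformalAlgebra L) (y : ℂ) (a a' b : L) :
    br C y (a + a') b = br C y a b + br C y a' b := by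
  obtain ⟨N, hN⟩ := C.bound a b
  obtain ⟨N', hN'⟩ := C.bound a' b
  rw [br_eq C y a b (max N N') (fun n hn => hN n (by omega)),
    br_eq C y a' b (max N N') (fun n hn => hN' n (by omega)),
    br_eq C y (a + a') b (max N N') (fun n hn => by
      simp [hN n (by omega), hN' n (by omega)]), ← Finset.sum_add_distrib]
  simp

theorem br_add_right (C : LieConformalAlgebra L) (y : ℂ) (a b b' : L) :
    br C y a (b + b') = br C y a b + br C y a b' := by
  obtain ⟨N, hN⟩ := C.bound a b
  obtain ⟨N', hN'⟩ := C.bound a b'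
  rw [br_eq C y a b (max N N') (fun n hn => hN n (by omega)),
    br_eq C y a b' (max N N') (fun n hn => hN' n (by omega)),
    br_eq C y a (b + b') (max N N') (fun n hn => by
      simp [hN n (by omega), hN' n (by omega)]), ← Finset.sum_add_distrib]
  simp

theorem br_smul_left (C : LieConformalAlgebra L) (y : ℂ) (c : ℂ) (a b : L) :
    br C y (c • a) b = c • br C y a b := by
  obtain ⟨N, hN⟩ := C.bound a b
  rw [br_eq C y a b N hN, br_eq C y (c • a) b N (fun n hn => by simp [hN n hn]), Finset.smul_sum]
  exact Finset.sum_congr rfl fun n _ => by simp [smul_smul, mul_comm]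

theorem br_smul_right (C : LieConformalAlgebra L) (y : ℂ) (c : ℂ) (a b : L) :
    br C y a (c • b) = c • br C y a b := by
  obtain ⟨N, hN⟩ := C.bound a b
  rw [br_eq C y a b N hN, br_eq C y a (c • b) N (fun n hn => by simp [hN n hn]), Finset.smul_sum]
  exact Finset.sum_congr rfl fun n _ => by simp [smul_smul, mul_comm]

/-- linear version -/
def brL (C : LieConformalAlgebra L) (y : ℂ) : L →ₗ[ℂ] L →ₗ[ℂ] L :=
  LinearMap.mk₂ ℂ (br C y) (br_add_left C y) (br_smul_left C y) (br_add_right C y)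
    (br_smul_right C y)

theorem brL_apply (C : LieConformalAlgebra L) (y : ℂ) (a b : L) : brL C y a b = br C y a b := rfl

theorem fac_shift (y : ℂ) (n : ℕ) :
    (y ^ (n + 1) * ((Nat.factorial (n + 1) : ℂ))⁻¹) * ((n + 1 : ℕ) : ℂ)
      = y * (y ^ n * ((Nat.factorial n : ℂ))⁻¹) := by
  have h1 : ((Nat.factorial n : ℕ) : ℂ) ≠ 0 := by exact_mod_cast Nat.factorial_ne_zero n
  have h2 : ((n + 1 : ℕ) : ℂ) ≠ 0 := by exact_mod_cast Nat.succ_ne_zero n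
  rw [Nat.factorial_succ, Nat.cast_mul]
  field_simp
  ring

theorem br_D_left (C : LieConformalAlgebra L) (y : ℂ) (a b : L) :
    br C y (C.D a) b = (-y) • br C y a b := by
  obtain ⟨N, hN⟩ := C.bound a b
  rw [br_eq C y a b N hN, br_eq C y (C.D a) b (N + 1) (fun n hn => by
    rw [C.sesq, hN (n - 1) (by omega), smul_zero]), Finset.sum_range_succ', Finset.smul_sum]
  have h0 : C.prd 0 (C.D a) b = 0 := by rw [C.sesq]; simp
  rw [h0, smul_zero, add_zero]
  refine Finset.sum_congr rfl fun n _ => ?_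
  rw [C.sesq, Nat.add_sub_cancel, smul_smul, smul_smul, mul_neg, fac_shift, neg_mul]

theorem br_D_right (C : LieConformalAlgebra L) (y : ℂ) (a b : L) :
    br C y a (C.D b) = C.D (br C y a b) + y • br C y a b := by
  obtain ⟨N, hN⟩ := C.bound a b
  have e1 := br_eq C y a b N hN
  have e2 := br_eq C y a b (N + 1) (fun n hn => hN n (by omega))
  rw [br_eq C y a (C.D b) (N + 1) (fun n hn => by
    rw [C.sesq', hN (n - 1) (by omega), hN n (by omega)]; simp)]
  simp only [C.sesq', smul_add, Finset.sum_add_distrib]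
  congr 1
  · rw [e2, map_sum]; simp
  · rw [Finset.sum_range_succ', e1, Finset.smul_sum]
    simp only [Nat.cast_zero, zero_smul, smul_zero, add_zero, Nat.add_sub_cancel]
    refine Finset.sum_congr rfl fun n _ => ?_
    rw [smul_smul, smul_smul, fac_shift]

theorem applyP_eq (C : LieConformalAlgebra L) (q : ℂ[X]) (x : L) :
    C.applyP q x = Polynomial.aeval C.D q x := by
  unfold LieConformalAlgebra.applyP
  rw [Polynomial.aeval_eq_sum_range, Polynomial.sum_over_range]
  · simp [LinearMap.sum_apply, Module.End.pow_apply]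
  · simp

theorem br_aeval_left (C : LieConformalAlgebra L) (y : ℂ) (q : ℂ[X]) (a b : L) :
    br C y (aeval C.D q a) b = q.eval (-y) • br C y a b := by
  induction q using Polynomial.induction_on' with
  | add p q hp hq => rw [map_add, LinearMap.add_apply, br_add_left, hp, hq, eval_add, add_smul]
  | monomial n c =>
    rw [← Polynomial.C_mul_X_pow_eq_monomial]
    induction n with
    | zero => simp [br_smul_left]
    | succ n ih =>
      have : aeval C.D (Polynomial.C c * X ^ (n + 1)) a
          = C.D (aeval C.D (Polynomial.C c * X ^ n) a) := by
        rw [show Polynomial.C c * X ^ (n + 1) = X * (Polynomial.C c * X ^ n) by ring, map_mul]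
        simp
      rw [this, br_D_left, ih, smul_smul]
      congr 1
      simp; ring

theorem br_aeval_right (C : LieConformalAlgebra L) (y : ℂ) (q : ℂ[X]) (a b : L) :
    br C y a (aeval C.D q b) = aeval C.D (q.comp (X + Polynomial.C y)) (br C y a b) := by
  induction q using Polynomial.induction_on' with
  | add p q hp hq =>
    rw [map_add, LinearMap.add_apply, br_add_right, hp, hq, add_comp, map_add, LinearMap.add_apply]
  | monomial n c =>
    rw [← Polynomial.C_mul_X_pow_eq_monomial]
    induction n with
    | zero => simp [br_smul_right]
    | succ n ih =>
      have : aeval C.D (Polynomial.C c * X ^ (n + 1)) b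
          = C.D (aeval C.D (Polynomial.C c * X ^ n) b) := by
        rw [show Polynomial.C c * X ^ (n + 1) = X * (Polynomial.C c * X ^ n) by ring, map_mul]
        simp
      have h2 : (Polynomial.C c * X ^ (n + 1) : ℂ[X]).comp (X + Polynomial.C y)
          = (X + Polynomial.C y) * (Polynomial.C c * X ^ n : ℂ[X]).comp (X + Polynomial.C y) := by
        simp only [mul_comp, C_comp, X_pow_comp]; ring
      rw [this, br_D_right, ih, h2]
      generalize (Polynomial.C c * X ^ n).comp (X + Polynomial.C y) = r
      rw [map_mul, map_add]
      simp

theorem exp_add (x y : ℂ) (t : ℕ) :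
    (x + y) ^ t * ((Nat.factorial t : ℂ))⁻¹
      = ∑ p ∈ Finset.HasAntidiagonal.antidiagonal t,
        (x ^ p.1 * ((Nat.factorial p.1 : ℂ))⁻¹) * (y ^ p.2 * ((Nat.factorial p.2 : ℂ))⁻¹) := by
  rw [(Commute.all x y).add_pow', Finset.sum_mul]
  refine Finset.sum_congr rfl fun p hp => ?_
  have hp := Finset.HasAntidiagonal.mem_antidiagonal.1 hp
  subst hp
  have h := Nat.add_choose_mul_factorial_mul_factorial p.1 p.2
  have h1 : ((Nat.factorial p.1 : ℕ) : ℂ) ≠ 0 := by exact_mod_cast Nat.factorial_ne_zero _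
  have h2 : ((Nat.factorial p.2 : ℕ) : ℂ) ≠ 0 := by exact_mod_cast Nat.factorial_ne_zero _
  have h3 : ((Nat.factorial (p.1 + p.2) : ℕ) : ℂ) ≠ 0 := by exact_mod_cast Nat.factorial_ne_zero _
  have h' : ((p.1 + p.2).choose p.1 : ℂ) * (p.1.factorial : ℂ) * (p.2.factorial : ℂ)
    = ((p.1 + p.2).factorial : ℂ) := by rw [Nat.choose_symm_add]; exact_mod_cast h
  rw [nsmul_eq_mul]
  field_simp
  rw [← h']; ring

theorem bound_fam (C : LieConformalAlgebra L) (u : ℕ → L) (a : L) (N₀ : ℕ)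
    (hu : ∀ n, N₀ ≤ n → u n = 0) : ∃ N, ∀ n m, N ≤ m → C.prd m a (u n) = 0 := by
  choose g hg using fun n => C.bound a (u n)
  refine ⟨(Finset.range N₀).sup g, fun n m hm => ?_⟩
  by_cases hn : N₀ ≤ n
  · rw [hu n hn, map_zero]
  · exact hg n m (le_trans (Finset.le_sup (f := g) (Finset.mem_range.2 (by omega))) hm)

theorem bound_fam' (C : LieConformalAlgebra L) (u : ℕ → L) (a : L) (N₀ : ℕ)
    (hu : ∀ n, N₀ ≤ n → u n = 0) : ∃ N, ∀ n m, N ≤ m → C.prd m (u n) a = 0 := by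
  choose g hg using fun n => C.bound (u n) a
  refine ⟨(Finset.range N₀).sup g, fun n m hm => ?_⟩
  by_cases hn : N₀ ≤ n
  · rw [hu n hn, map_zero, LinearMap.zero_apply]
  · exact hg n m (le_trans (Finset.le_sup (f := g) (Finset.mem_range.2 (by omega))) hm)

theorem br_nest (C : LieConformalAlgebra L) (x y : ℂ) (a b c : L) (M : ℕ)
    (h1 : ∀ n, M ≤ n → C.prd n b c = 0) (h2 : ∀ n m, M ≤ m → C.prd m a (C.prd n b c) = 0) :
    br C x a (br C y b c) = ∑ n ∈ Finset.range M, ∑ m ∈ Finset.range M,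
      ((x ^ m * ((Nat.factorial m : ℂ))⁻¹) * (y ^ n * ((Nat.factorial n : ℂ))⁻¹)) •
        C.prd m a (C.prd n b c) := by
  rw [br_eq C y b c M h1, ← brL_apply, map_sum]
  refine Finset.sum_congr rfl fun n _ => ?_
  rw [brL_apply, br_smul_right, br_eq C x a _ M (h2 n), Finset.smul_sum]
  refine Finset.sum_congr rfl fun m _ => ?_
  rw [smul_smul, mul_comm]

theorem br_jacobi (C : LieConformalAlgebra L) (x y : ℂ) (a b c : L) :
    br C x a (br C y b c) = br C (x + y) (br C x a b) c + br C y b (br C x a c) := by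
  obtain ⟨N1, h1⟩ := C.bound b c
  obtain ⟨N2, h2⟩ := C.bound a c
  obtain ⟨N3, h3⟩ := C.bound a b
  obtain ⟨N4, h4⟩ := bound_fam C (fun n => C.prd n b c) a N1 h1
  obtain ⟨N5, h5⟩ := bound_fam C (fun n => C.prd n a c) b N2 h2
  obtain ⟨N6, h6⟩ := bound_fam' C (fun n => C.prd n a b) c N3 h3
  obtain ⟨N, hN1, hN2, hN3, hN4, hN5, hN6⟩ : ∃ N, N1 ≤ N ∧ N2 ≤ N ∧ N3 ≤ N ∧ N4 ≤ N ∧ N5 ≤ N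
      ∧ N6 ≤ N := ⟨N1 + N2 + N3 + N4 + N5 + N6, by omega, by omega, by omega, by omega, by omega,
        by omega⟩
  rw [br_nest C x y a b c (2 * N) (fun n hn => h1 n (by omega)) (fun n m hm => h4 n m (by omega)),
    br_nest C y x b a c (2 * N) (fun n hn => h2 n (by omega)) (fun n m hm => h5 n m (by omega)),
    Finset.sum_comm (s := Finset.range (2 * N)) (t := Finset.range (2 * N)), ← sub_eq_iff_eq_add,
    ← Finset.sum_sub_distrib]
  have key : br C (x + y) (br C x a b) c = ∑ j ∈ Finset.range N, ∑ k ∈ Finset.range N,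
      ∑ n ∈ Finset.range N, ((x ^ j * ((Nat.factorial j : ℂ))⁻¹) *
        ((x ^ k * ((Nat.factorial k : ℂ))⁻¹) * (y ^ n * ((Nat.factorial n : ℂ))⁻¹))) •
          C.prd (k + n) (C.prd j a b) c := by
    rw [br_eq C x a b N (fun n hn => h3 n (by omega)), ← brL_apply, map_sum, LinearMap.sum_apply]
    refine Finset.sum_congr rfl fun j _ => ?_
    rw [brL_apply, br_smul_left, br_eq C _ _ c (2 * N) (fun n hn => h6 j n (by omega)),
      ← sum_tri N (fun k n => ((x ^ j * ((Nat.factorial j : ℂ))⁻¹) *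
        ((x ^ k * ((Nat.factorial k : ℂ))⁻¹) * (y ^ n * ((Nat.factorial n : ℂ))⁻¹))) •
          C.prd (k + n) (C.prd j a b) c), Finset.smul_sum]
    · refine Finset.sum_congr rfl fun t _ => ?_
      rw [exp_add, Finset.sum_smul, Finset.smul_sum]
      refine Finset.sum_congr rfl fun p hp => ?_
      rw [Finset.HasAntidiagonal.mem_antidiagonal.1 hp, smul_smul]
    · intro k n hkn
      rw [show C.prd (k + n) (C.prd j a b) c = 0 from h6 j (k + n) (by omega), smul_zero]
  rw [key]
  have e1 : ∀ n m : ℕ, ((x ^ m * ((Nat.factorial m : ℂ))⁻¹) * (y ^ n * ((Nat.factorial n : ℂ))⁻¹)) •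
        C.prd m a (C.prd n b c) - ((y ^ n * ((Nat.factorial n : ℂ))⁻¹) *
        (x ^ m * ((Nat.factorial m : ℂ))⁻¹)) • C.prd n b (C.prd m a c)
      = ∑ p ∈ Finset.HasAntidiagonal.antidiagonal m, ((x ^ p.1 * ((Nat.factorial p.1 : ℂ))⁻¹) *
        ((x ^ p.2 * ((Nat.factorial p.2 : ℂ))⁻¹) * (y ^ n * ((Nat.factorial n : ℂ))⁻¹))) •
          C.prd (p.2 + n) (C.prd p.1 a b) c := by
    intro n m
    rw [mul_comm (y ^ n * _), ← smul_sub, C.jacobi, Finset.Nat.sum_antidiagonal_eq_sum_range_succ_mk,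
      Finset.smul_sum]
    refine Finset.sum_congr rfl fun j hj => ?_
    have hj : j ≤ m := by simpa [Nat.lt_succ_iff] using hj
    rw [smul_smul, show m - j + n = m + n - j by omega]
    congr 1
    have h1 : ((Nat.factorial j : ℕ) : ℂ) ≠ 0 := by exact_mod_cast Nat.factorial_ne_zero _
    have h2 : ((Nat.factorial (m - j) : ℕ) : ℂ) ≠ 0 := by exact_mod_cast Nat.factorial_ne_zero _
    have h3 : ((Nat.factorial m : ℕ) : ℂ) ≠ 0 := by exact_mod_cast Nat.factorial_ne_zero _
    have h4 : ((Nat.factorial n : ℕ) : ℂ) ≠ 0 := by exact_mod_cast Nat.factorial_ne_zero _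
    have h' : (m.choose j : ℂ) * (j.factorial : ℂ) * ((m - j).factorial : ℂ)
      = (m.factorial : ℂ) := by exact_mod_cast Nat.choose_mul_factorial_mul_factorial hj
    have hx : x ^ m = x ^ j * x ^ (m - j) := by rw [← pow_add]; congr 1; omega
    rw [hx]
    field_simp
    rw [← h']; ring
  have e2 : ∀ m, ∑ n ∈ Finset.range (2 * N), ((x ^ m * ((Nat.factorial m : ℂ))⁻¹) *
      (y ^ n * ((Nat.factorial n : ℂ))⁻¹)) • C.prd m a (C.prd n b c)
      - ∑ n ∈ Finset.range (2 * N), ((y ^ n * ((Nat.factorial n : ℂ))⁻¹) *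
        (x ^ m * ((Nat.factorial m : ℂ))⁻¹)) • C.prd n b (C.prd m a c)
      = ∑ p ∈ Finset.HasAntidiagonal.antidiagonal m, ∑ n ∈ Finset.range (2 * N),
        ((x ^ p.1 * ((Nat.factorial p.1 : ℂ))⁻¹) *
        ((x ^ p.2 * ((Nat.factorial p.2 : ℂ))⁻¹) * (y ^ n * ((Nat.factorial n : ℂ))⁻¹))) •
          C.prd (p.2 + n) (C.prd p.1 a b) c := by
    intro m
    rw [← Finset.sum_sub_distrib, Finset.sum_comm]
    exact Finset.sum_congr rfl fun n _ => e1 n m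
  rw [Finset.sum_congr rfl fun m _ => e2 m]
  rw [sum_tri N (fun j k => ∑ n ∈ Finset.range (2 * N),
        ((x ^ j * ((Nat.factorial j : ℂ))⁻¹) *
        ((x ^ k * ((Nat.factorial k : ℂ))⁻¹) * (y ^ n * ((Nat.factorial n : ℂ))⁻¹))) •
          C.prd (k + n) (C.prd j a b) c)]
  · refine Finset.sum_congr rfl fun j _ => Finset.sum_congr rfl fun k _ => ?_
    symm
    apply Finset.sum_subset
    · intro n hn; simp only [Finset.mem_range] at hn ⊢; omega
    · intro n _ hn
      simp only [Finset.mem_range] at hn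
      rw [show C.prd (k + n) (C.prd j a b) c = 0 from h6 j (k + n) (by omega), smul_zero]
  · intro j k hjk
    apply Finset.sum_eq_zero
    intro n _
    rcases hjk with hj | hk
    · rw [h3 j (by omega)]; simp
    · rw [show C.prd (k + n) (C.prd j a b) c = 0 from h6 j (k + n) (by omega), smul_zero]

end ECLProof

namespace ECLProof

/-- abstract systems of structure functions -/
structure Sys where
  E : ℤ → ℤ → ℂ → ℂ → ℂ
  supp : ℤ → Prop
  poly : ∀ i j (l₁ l₂ : ℂ[X]), ∃ r : ℂ[X], ∀ t, E i j (l₁.eval t) (l₂.eval t) = r.eval t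
  jac : ∀ i j k, supp (i + j + k) → ∀ x a b : ℂ,
    E j k (x + a) b * E i (j + k) x a
      = E i j (-(a + b)) a * E (i + j) k x (a + b) + E i k (x + b) a * E j (i + k) x b
  skew : ∀ i j, supp (i + j) → ∀ x a, E i j x a = - E j i x (-a - x)
  van : ∀ i j, ¬ supp (i + j) → ∀ x y, E i j x y = 0
  s0 : supp 0
  s1 : supp 1
  sm1 : supp (-1)
  z00 : ∀ x y, E 0 0 x y = 0

variable {L : Type} [AddCommGroup L] [Module ℂ L]

theorem br_bas (C : RankOneContext L) (i j : ℤ) (y : ℂ) :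
    br C.toLieConformalAlgebra y (C.bas i) (C.bas j)
      = aeval C.D ((C.sp i j).eval (Polynomial.C y)) (C.bas (i + j)) := by
  obtain ⟨N, hN⟩ := C.bound (C.bas i) (C.bas j)
  rw [br_eq C.toLieConformalAlgebra y _ _ (max N ((C.sp i j).natDegree + 1))
    (fun n hn => hN n (by omega)),
    eval_eq_sum_range' (n := max N ((C.sp i j).natDegree + 1)) (by omega), map_sum,
    LinearMap.sum_apply]
  refine Finset.sum_congr rfl fun n _ => ?_
  rw [C.sp_brkt]
  change _ • _ • C.applyP _ _ = _
  rw [applyP_eq, smul_smul, ← Polynomial.C_pow, mul_comm ((C.sp i j).coeff n), ← Polynomial.smul_eq_C_mul,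
    map_smul, LinearMap.smul_apply]
  congr 1
  have h1 : ((Nat.factorial n : ℕ) : ℂ) ≠ 0 := by exact_mod_cast Nat.factorial_ne_zero _
  field_simp

theorem indep0 (C : RankOneContext L) (i : ℤ) (hi : C.G i ≠ ⊥) (q : ℂ[X])
    (h : aeval C.D q (C.bas i) = 0) : q = 0 := by
  have hl := linearIndependent_iff'.1 (C.bas_indep i hi) (Finset.range (q.natDegree + 1)) q.coeff
  rw [Polynomial.aeval_eq_sum_range, LinearMap.sum_apply] at h
  simp only [LinearMap.smul_apply, Module.End.pow_apply] at h
  have := hl h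
  ext n
  by_cases hn : n < q.natDegree + 1
  · simpa using this n (Finset.mem_range.2 hn)
  · simpa using coeff_eq_zero_of_natDegree_lt (by omega)

theorem indep (C : RankOneContext L) (i : ℤ) (hi : C.G i ≠ ⊥) (q r : ℂ[X])
    (h : aeval C.D q (C.bas i) = aeval C.D r (C.bas i)) : q = r := by
  rw [← sub_eq_zero]
  apply indep0 C i hi
  rw [map_sub, LinearMap.sub_apply, h, sub_self]

theorem sp_jac (C : RankOneContext L) (i j k : ℤ) (h : C.G (i + j + k) ≠ ⊥) (a b : ℂ) :
    ((C.sp j k).eval (Polynomial.C b)).comp (X + Polynomial.C a)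
        * (C.sp i (j + k)).eval (Polynomial.C a)
      = Polynomial.C (((C.sp i j).eval (Polynomial.C a)).eval (-(a + b)))
          * (C.sp (i + j) k).eval (Polynomial.C (a + b))
        + ((C.sp i k).eval (Polynomial.C a)).comp (X + Polynomial.C b)
          * (C.sp j (i + k)).eval (Polynomial.C b) := by
  have J := br_jacobi C.toLieConformalAlgebra a b (C.bas i) (C.bas j) (C.bas k)
  rw [br_bas C j k, br_bas C i j, br_bas C i k, br_aeval_right, br_aeval_left, br_aeval_right,
    br_bas, br_bas, br_bas, show i + (j + k) = i + j + k by ring,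
    show j + (i + k) = i + j + k by ring] at J
  apply indep C (i + j + k) h
  rw [← Module.End.mul_apply, ← Module.End.mul_apply, ← map_mul, ← map_mul, ← LinearMap.smul_apply,
    ← map_smul, ← LinearMap.add_apply, ← map_add, Polynomial.smul_eq_C_mul] at J
  exact J

theorem sp_skew (C : RankOneContext L) (i j : ℤ) (h : C.G (i + j) ≠ ⊥) (a : ℂ) :
    (C.sp i j).eval (Polynomial.C a) = - (C.sp j i).eval (-Polynomial.C a - X) := by
  apply indep C (i + j) h
  rw [← br_bas]
  obtain ⟨N1, h1⟩ := C.bound (C.bas i) (C.bas j)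
  obtain ⟨N2, h2⟩ := C.bound (C.bas j) (C.bas i)
  obtain ⟨N, hN1, hN2, hN3⟩ : ∃ N, N1 ≤ N ∧ N2 ≤ N ∧ (C.sp j i).natDegree < N :=
    ⟨N1 + N2 + (C.sp j i).natDegree + 1, by omega, by omega, by omega⟩
  rw [br_eq C.toLieConformalAlgebra a _ _ N (fun n hn => h1 n (by omega)),
    eval_eq_sum_range' (n := 2 * N) (by omega), map_neg, map_sum,
    LinearMap.neg_apply, LinearMap.sum_apply]
  have e1 : ∀ n, (a ^ n * ((Nat.factorial n : ℂ))⁻¹) • C.prd n (C.bas i) (C.bas j)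
      = - ∑ k ∈ Finset.range N, ((a ^ n * ((Nat.factorial n : ℂ))⁻¹)
        * ((-1 : ℂ) ^ (n + k) * ((Nat.factorial k : ℂ))⁻¹)) •
          (⇑C.D)^[k] (C.prd (n + k) (C.bas j) (C.bas i)) := by
    intro n
    rw [C.skew n, finsum_eq_sum_of_support_subset (s := Finset.range N), smul_neg, Finset.smul_sum]
    · simp only [smul_smul]
    · intro k hk
      simp only [Function.mem_support] at hk
      simp only [Finset.coe_range, Set.mem_Iio]
      by_contra hc
      exact hk (by rw [h2 (n + k) (by omega), ← Module.End.pow_apply, map_zero, smul_zero])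
  rw [Finset.sum_congr rfl fun n _ => e1 n, Finset.sum_neg_distrib,
    ← sum_tri N (fun n k => ((a ^ n * ((Nat.factorial n : ℂ))⁻¹)
        * ((-1 : ℂ) ^ (n + k) * ((Nat.factorial k : ℂ))⁻¹)) •
          (⇑C.D)^[k] (C.prd (n + k) (C.bas j) (C.bas i)))]
  · congr 1
    refine Finset.sum_congr rfl fun t _ => ?_
    rw [show (-Polynomial.C a - X : ℂ[X]) = Polynomial.C (-1) * (Polynomial.C a + X) by
      simp; ring, mul_pow,
      (Commute.all (Polynomial.C a) X).add_pow', Finset.mul_sum, Finset.mul_sum, map_sum,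
      LinearMap.sum_apply]
    refine Finset.sum_congr rfl fun p hp => ?_
    have hp := Finset.HasAntidiagonal.mem_antidiagonal.1 hp
    subst hp
    rw [C.sp_brkt]
    change _ • _^[_] (_ • C.applyP _ _) = _
    rw [applyP_eq, ← Module.End.pow_apply, map_smul, smul_smul, add_comm j i]
    have : (C.sp j i).coeff (p.1 + p.2) * (Polynomial.C (-1) ^ (p.1 + p.2) *
        (p.1 + p.2).choose p.1 • (Polynomial.C a ^ p.1 * X ^ p.2))
        = ((-1) ^ (p.1 + p.2) * (((p.1 + p.2).choose p.1 : ℂ) * a ^ p.1)) •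
          (X ^ p.2 * (C.sp j i).coeff (p.1 + p.2)) := by
      rw [Polynomial.smul_eq_C_mul]
      simp only [nsmul_eq_mul, map_mul, map_pow, map_natCast]
      ring
    rw [this, map_smul, LinearMap.smul_apply, map_mul, Module.End.mul_apply, map_pow, aeval_X]
    congr 1
    have h1 : ((Nat.factorial p.1 : ℕ) : ℂ) ≠ 0 := by exact_mod_cast Nat.factorial_ne_zero _
    have h2 : ((Nat.factorial p.2 : ℕ) : ℂ) ≠ 0 := by exact_mod_cast Nat.factorial_ne_zero _
    have h' : ((p.1 + p.2).choose p.1 : ℂ) * (p.1.factorial : ℂ) * (p.2.factorial : ℂ)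
      = ((p.1 + p.2).factorial : ℂ) := by
      rw [Nat.choose_symm_add]; exact_mod_cast Nat.add_choose_mul_factorial_mul_factorial p.1 p.2
    rw [← h']
    field_simp
  · intro n k hnk
    rw [h2 (n + k) (by omega), ← Module.End.pow_apply, map_zero, smul_zero]

theorem eval_sub (p : ℂ[X][X]) (q : ℂ[X]) (x : ℂ) :
    (p.eval q).eval x = (p.eval (Polynomial.C (q.eval x))).eval x := by
  induction p using Polynomial.induction_on' with
  | add p q hp hq => simp [hp, hq]
  | monomial n c => simp

theorem poly_sub (p : ℂ[X][X]) (l₁ l₂ : ℂ[X]) : ∃ r : ℂ[X], ∀ t : ℂ,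
    (p.eval (Polynomial.C (l₂.eval t))).eval (l₁.eval t) = r.eval t := by
  induction p using Polynomial.induction_on' with
  | add p q hp hq =>
    obtain ⟨r, hr⟩ := hp
    obtain ⟨r', hr'⟩ := hq
    exact ⟨r + r', fun t => by simp [hr, hr']⟩
  | monomial n c => exact ⟨c.comp l₁ * l₂ ^ n, fun t => by simp⟩

/-- the system of an algebra -/
def toSys (C : ClassV L) : Sys where
  E i j x y := ((C.sp i j).eval (Polynomial.C y)).eval x
  supp i := C.G i ≠ ⊥
  poly i j l₁ l₂ := poly_sub _ _ _
  jac i j k h x a b := by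
    have := congrArg (Polynomial.eval x) (sp_jac C.toRankOneContext i j k h a b)
    simpa using this
  skew i j h x a := by
    have := congrArg (Polynomial.eval x) (sp_skew C.toRankOneContext i j h a)
    rw [eval_neg, eval_sub (C.sp j i)] at this
    simpa using this
  van i j h x y := by
    rw [C.sp_zero i j (Or.inr (Or.inr (not_not.1 h)))]; simp
  s0 := C.supp_zero
  s1 := C.supp_one
  sm1 := C.supp_negone
  z00 x y := by
    have h := br_bas C.toRankOneContext 0 0 y
    have h0 : br C.toLieConformalAlgebra y (C.bas 0) (C.bas 0) = 0 := by
      rw [br_eq _ _ _ _ 0 (fun n _ => C.abelian0 n _ (C.bas_mem 0) _ (C.bas_mem 0))]; simp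
    rw [h0] at h
    have := indep0 C.toRankOneContext (0 + 0) (by simpa using C.supp_zero) _ h.symm
    rw [this]; simp

end ECLProof

namespace ECLProof

/-- structure functions of ECL -/
def pe (s : ℂ) (i j : ℤ) (x y : ℂ) : ℂ :=
  if i + j = 0 then (i : ℂ) * (x + s) * (x + 2 * s)
  else if i = 0 then -(j : ℂ)
  else if j = 0 then (i : ℂ)
  else (i : ℂ) * x + ((i : ℂ) + (j : ℂ)) * y + s * ((i : ℂ) - (j : ℂ))

/-- rescaling of the basis -/
def Sys.rescale (S : Sys) (a : ℤ → ℂ) (ha : ∀ i, a i ≠ 0) : Sys where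
  E i j x y := S.E i j x y * (a i * a j / a (i + j))
  supp := S.supp
  poly i j l₁ l₂ := by
    obtain ⟨r, hr⟩ := S.poly i j l₁ l₂
    exact ⟨r * Polynomial.C (a i * a j / a (i + j)), fun t => by simp [hr]⟩
  jac i j k h x p q := by
    have J := S.jac i j k h x p q
    have h1 := ha (i + j)
    have h2 := ha (j + k)
    have h3 := ha (i + k)
    have h4 := ha (i + j + k)
    rw [show i + (j + k) = i + j + k by ring, show j + (i + k) = i + j + k by ring]
    linear_combination (a i * a j * a k / a (i + j + k)) * J +
      (S.E j k (x + p) q * S.E i (j + k) x p) * (a i * a j * a k / a (i + j + k)) *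
        (mul_inv_cancel₀ h2) -
      (S.E i j (-(p + q)) p * S.E (i + j) k x (p + q)) * (a i * a j * a k / a (i + j + k)) *
        (mul_inv_cancel₀ h1) -
      (S.E i k (x + q) p * S.E j (i + k) x q) * (a i * a j * a k / a (i + j + k)) *
        (mul_inv_cancel₀ h3)
  skew i j h x p := by
    rw [S.skew i j h, add_comm j i, mul_comm (a j)]; ring
  van i j h x y := by rw [S.van i j h, zero_mul]
  s0 := S.s0
  s1 := S.s1
  sm1 := S.sm1
  z00 x y := by rw [S.z00, zero_mul]

/-- reversing the grading -/
def Sys.mirror (S : Sys) : Sys where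
  E i j x y := - S.E (-i) (-j) x y
  supp i := S.supp (-i)
  poly i j l₁ l₂ := by
    obtain ⟨r, hr⟩ := S.poly (-i) (-j) l₁ l₂
    exact ⟨-r, fun t => by simp [hr]⟩
  jac i j k h x p q := by
    have J := S.jac (-i) (-j) (-k) (by convert h using 1; ring) x p q
    simp only [neg_add]
    simp only [neg_add] at J
    linear_combination J
  skew i j h x p := by
    rw [S.skew (-i) (-j) (by convert h using 1; ring)]
  van i j h x y := by
    rw [S.van (-i) (-j) (by convert h using 2; ring), neg_zero]
  s0 := by simpa using S.s0
  s1 := S.sm1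
  sm1 := by simpa using S.s1
  z00 x y := by simpa using S.z00 x y

theorem Sys.jac' (S : Sys) (i j k : ℤ) {ij jk ik t : ℤ} (h1 : i + j = ij) (h2 : j + k = jk)
    (h3 : i + k = ik) (h4 : i + j + k = t) (ht : S.supp t) (x a b : ℂ) :
    S.E j k (x + a) b * S.E i jk x a
      = S.E i j (-(a + b)) a * S.E ij k x (a + b) + S.E i k (x + b) a * S.E j ik x b := by
  subst h1 h2 h3 h4
  exact S.jac i j k ht x a b

theorem unit_const (p q : ℂ[X]) (h : ∀ t, p.eval t * q.eval t = 1) :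
    ∃ u : ℂ, u ≠ 0 ∧ (∀ t, p.eval t = u) ∧ ∀ t, q.eval t = u⁻¹ := by
  have hpq : p * q = 1 := by
    apply Polynomial.funext; intro t; simp [h t]
  have hu : IsUnit p := IsUnit.of_mul_eq_one q hpq
  obtain ⟨u, hu0, hu⟩ := Polynomial.isUnit_iff.1 hu
  have hu0 : u ≠ 0 := hu0.ne_zero
  refine ⟨u, hu0, fun t => by rw [← hu]; simp, fun t => ?_⟩
  have := h t
  rw [← hu, eval_C] at this
  field_simp
  linear_combination this

theorem factor (P Q : ℂ → ℂ → ℂ) (m c₁ c₂ : ℂ) (hm : m ≠ 0)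
    (h : ∀ a y z, P a y * Q a z = (a + m * y + c₁) * (-a + m * z + c₂))
    (hP : ∃ r : ℂ[X], ∀ a, P a ((1 - a - c₁) / m) = r.eval a)
    (hQ : ∃ r : ℂ[X], ∀ a, Q a ((1 + a - c₂) / m) = r.eval a) :
    ∃ u : ℂ, u ≠ 0 ∧ (∀ a y, P a y = u * (a + m * y + c₁)) ∧
      ∀ a z, Q a z = u⁻¹ * (-a + m * z + c₂) := by
  obtain ⟨p, hp⟩ := hP
  obtain ⟨q, hq⟩ := hQ
  have e1 : ∀ a, a + m * ((1 - a - c₁) / m) + c₁ = 1 := fun a => by field_simp; ring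
  have e2 : ∀ a, -a + m * ((1 + a - c₂) / m) + c₂ = 1 := fun a => by field_simp; ring
  obtain ⟨u, hu, hpu, hqu⟩ := unit_const p q (fun t => by
    rw [← hp, ← hq, h, e1, e2, one_mul])
  refine ⟨u, hu, fun a y => ?_, fun a z => ?_⟩
  · have := h a y ((1 + a - c₂) / m)
    rw [e2, hq, hqu] at this
    field_simp at this
    linear_combination this
  · have := h a ((1 - a - c₁) / m) z
    rw [e1, hp, hpu] at this
    field_simp
    linear_combination this

theorem Sys.fin (S : Sys) (s : ℂ) (n : ℤ) (hn : (n : ℂ) + 1 ≠ 0)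
    (h01 : ∀ x y, S.E 0 1 x y = -1) (h0n : ∀ x y, S.E 0 n x y = -(n : ℂ))
    (h : ∀ x a b, S.E 1 n (x + a) b * S.E (-1) (n + 1) x a
      = (x + a + (n + 1) * b + s * (1 - n)) * (-x + n * a - s * (n + 2))) :
    ∃ u : ℂ, u ≠ 0 ∧ (∀ x y, S.E 1 n x y = u * (x + (n + 1) * y + s * (1 - n))) ∧
      (∀ x y, S.E (-1) (n + 1) x y = u⁻¹ * (-x + n * y - s * (n + 2))) ∧
      (∀ x y, S.E 0 (n + 1) x y = -((n : ℂ) + 1)) ∧ S.supp (n + 1) := by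
  obtain ⟨u, hu, hP, hQ⟩ := factor (fun a y => S.E 1 n a y) (fun a z => S.E (-1) (n + 1) (a - z) z)
    (n + 1) (s * (1 - n)) (- (s * (n + 2))) hn
    (fun a y z => by
      have := h (a - z) z y
      rw [sub_add_cancel] at this
      rw [this]; ring)
    (by
      obtain ⟨r, hr⟩ := S.poly 1 n X (Polynomial.C (((n : ℂ) + 1)⁻¹) *
        (1 - X - Polynomial.C (s * (1 - n))))
      refine ⟨r, fun a => ?_⟩
      rw [← hr]; simp [div_eq_inv_mul])
    (by
      obtain ⟨r, hr⟩ := S.poly (-1) (n + 1) (X - Polynomial.C (((n : ℂ) + 1)⁻¹) *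
        (1 + X - Polynomial.C (- (s * (n + 2))))) (Polynomial.C (((n : ℂ) + 1)⁻¹) *
        (1 + X - Polynomial.C (- (s * (n + 2)))))
      refine ⟨r, fun a => ?_⟩
      rw [← hr]; simp [div_eq_inv_mul])
  have hsupp : S.supp (n + 1) := by
    by_contra hc
    have := S.van 1 n (by rwa [add_comm]) (1 - s * (1 - n)) 0
    rw [hP] at this
    apply hu
    linear_combination this
  refine ⟨u, hu, hP, fun x y => ?_, fun x y => ?_, hsupp⟩
  · have := hQ (x + y) y
    simp only [add_sub_cancel_right] at this
    rw [this]; ring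
  · have J := S.jac' 0 1 n (zero_add 1) (add_comm 1 n) (zero_add n) (by ring) hsupp x y
      ((1 - (x + y) - s * (1 - n)) / (n + 1))
    rw [h01, h0n] at J
    simp only [hP] at J
    have e1 : x + y + ((n : ℂ) + 1) * ((1 - (x + y) - s * (1 - n)) / (n + 1)) + s * (1 - n) = 1 := by
      field_simp; ring
    set b := (1 - (x + y) - s * (1 - n)) / ((n : ℂ) + 1) with hb
    rw [e1] at J
    have e2 : x + ((n : ℂ) + 1) * b + s * (1 - n) = 1 - y := by linear_combination e1
    have e3 : x + ((n : ℂ) + 1) * (y + b) + s * (1 - n) = 1 + n * y := by linear_combination e1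
    rw [e2, e3] at J
    apply mul_left_cancel₀ hu
    linear_combination J

/-- normalized systems -/
structure Sys.Norm (S : Sys) (b c : ℂ) : Prop where
  h01 : ∀ x y, S.E 0 1 x y = -1
  h0m : ∀ x y, S.E 0 (-1) x y = 1
  hm : ∀ x y, S.E (-1) 1 x y = -(x ^ 2 + b * x + c)

theorem Sys.Norm.h10 {S : Sys} {b c : ℂ} (h : S.Norm b c) (x y : ℂ) : S.E 1 0 x y = 1 := by
  rw [S.skew 1 0 (by simpa using S.s1), h.h01, neg_neg]

theorem Sys.Norm.mirror {S : Sys} {b c : ℂ} (h : S.Norm b c) : S.mirror.Norm b c where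
  h01 x y := by simp [Sys.mirror, h.h0m]
  h0m x y := by simp [Sys.mirror, h.h01]
  hm x y := by
    have := S.skew 1 (-1) (by simpa using S.s0) x y
    simp [Sys.mirror, this, h.hm]

/-- the inductive claim -/
def Sys.Claim (S : Sys) (s : ℂ) (n : ℕ) : Prop :=
  ∃ u : ℂ, u ≠ 0 ∧ (∀ x y, S.E 1 n x y = u * (x + (n + 1) * y + s * (1 - n))) ∧
      (∀ x y, S.E (-1) (n + 1) x y = u⁻¹ * (-x + n * y - s * (n + 2))) ∧
      (∀ x y, S.E 0 (n + 1) x y = -((n : ℂ) + 1)) ∧ S.supp (n + 1)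

theorem Sys.Norm.claim1 {S : Sys} {s c : ℂ} (h : S.Norm (3 * s) c) : S.Claim s 1 := by
  have := S.fin s 1 (by norm_num) h.h01 (by simpa using h.h01) (fun x a b => by
    have J := S.jac' (-1) 1 1 (neg_add_cancel 1) rfl (neg_add_cancel 1) rfl (by simpa using S.s1) x a b
    rw [h.hm, h.hm, h.h01, h.h10] at J
    simp only [Int.cast_one] at J ⊢
    refine Eq.trans J ?_
    ring)
  simpa [Sys.Claim] using this

theorem Sys.Norm.c_eq {S : Sys} {s c : ℂ} (h : S.Norm (3 * s) c) : c = 2 * s ^ 2 := by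
  obtain ⟨u, hu, h1, h2, h3, h4⟩ := h.claim1
  simp only [Nat.cast_one, one_add_one_eq_two] at h1 h2 h3 h4
  have J : ∀ x y z, S.E 1 2 (x + y) z * S.E (-1) 3 x y
      = (x + y + 3 * z - s) * (-x + 2 * y - 4 * s) + (2 * c - 4 * s ^ 2) := by
    intro x y z
    have J := S.jac' (-1) 1 2 (neg_add_cancel 1) rfl (by norm_num : (-1 : ℤ) + 2 = 1) rfl
      (by simpa using h4) x y z
    rw [h.hm, h3, h2, h1] at J
    refine Eq.trans J ?_
    field_simp
    ring
  have a1 := J (-(4 * s / 3)) (4 * s / 3) (s / 3)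
  have a2 := J (-((4 * s + 1) / 3)) ((4 * s + 1) / 3) (s / 3)
  have a3 := J (-(4 * s / 3)) (4 * s / 3) ((s + 1) / 3)
  have a4 := J (-((4 * s + 1) / 3)) ((4 * s + 1) / 3) ((s + 1) / 3)
  rw [neg_add_cancel] at a1 a2 a3 a4
  generalize S.E 1 2 0 (s / 3) = p at *
  generalize S.E 1 2 0 ((s + 1) / 3) = p' at *
  generalize S.E (-1) 3 (-(4 * s / 3)) (4 * s / 3) = q at *
  generalize S.E (-1) 3 (-((4 * s + 1) / 3)) ((4 * s + 1) / 3) = q' at *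
  ring_nf at a1 a2 a3 a4
  have : (p * q) * (p' * q') = (p * q') * (p' * q) := by ring
  rw [a1, a2, mul_comm p' q', mul_comm p' q] at this
  have a3' : q * p' = c * 2 - s ^ 2 * 4 := by linear_combination a3
  have a4' : q' * p' = 1 + c * 2 - s ^ 2 * 4 := by linear_combination a4
  rw [a3', a4'] at this
  linear_combination this / 2

theorem Sys.Norm.claim {S : Sys} {s c : ℂ} (h : S.Norm (3 * s) c) (n : ℕ) : S.Claim s (n + 1) := by
  induction n with
  | zero => exact h.claim1
  | succ n ih =>
    obtain ⟨u, hu, h1, h2, h3, h4⟩ := ih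
    have hc := h.c_eq
    have := S.fin s ((n + 2 : ℕ) : ℤ) (by exact_mod_cast Nat.succ_ne_zero (n + 2)) h.h01
      (fun x y => by
        have := h3 x y
        push_cast at this ⊢
        rw [show (n : ℤ) + 2 = n + 1 + 1 by ring, this]; ring)
      (fun x a b => by
        have J := S.jac' (-1) 1 ((n + 2 : ℕ) : ℤ) (neg_add_cancel 1) (add_comm 1 _)
          (show (-1 : ℤ) + ((n + 2 : ℕ) : ℤ) = ((n + 1 : ℕ) : ℤ) by push_cast; ring)
          (show (-1 : ℤ) + 1 + ((n + 2 : ℕ) : ℤ) = ((n + 1 : ℕ) : ℤ) + 1 by push_cast; ring) h4 x a b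
        have e : ((n + 2 : ℕ) : ℤ) = ((n + 1 : ℕ) : ℤ) + 1 := by push_cast; ring
        refine Eq.trans J ?_
        rw [h.hm, h1, e, h3, h2, hc]
        push_cast
        field_simp
        ring)
    change S.Claim s (n + 2)
    unfold Sys.Claim
    simpa only [Int.cast_natCast] using this

end ECLProof

namespace ECLProof

theorem pe_neg (s : ℂ) (i j : ℤ) (x y : ℂ) : pe s (-i) (-j) x y = - pe s i j x y := by
  unfold pe
  have e : -i + -j = 0 ↔ i + j = 0 := by omega
  simp only [e, neg_eq_zero, Int.cast_neg]
  split_ifs <;> ring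

theorem pe_jac (s : ℂ) (i j : ℤ) (hi : 1 ≤ i) (x a b : ℂ) :
    pe s i j (x + a) b * pe s 1 (i + j) x a
      = (-(a + b) + (i + 1) * a + s * (1 - i)) * pe s (1 + i) j x (a + b)
        + pe s 1 j (x + b) a * pe s i (1 + j) x b := by
  have i0 : i ≠ 0 := by omega
  have i1 : 1 + i ≠ 0 := by omega
  have i1b : i + 1 ≠ 0 := by omega
  by_cases h1 : j = 0
  · subst h1
    simp only [pe, add_zero, i0, i1, i1b, if_true, if_false, one_ne_zero]
    push_cast
    ring
  by_cases h2 : j = -1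
  · subst h2
    by_cases h3 : i = 1
    · subst h3
      norm_num [pe]
      ring
    · have e1 : i + -1 ≠ 0 := by omega
      have e2 : 1 + i + -1 ≠ 0 := by omega
      have e3 : 1 + (i + -1) ≠ 0 := by omega
      simp only [pe, i0, i1, e1, e2, e3, if_true, if_false, one_ne_zero, add_neg_cancel, add_zero,
        show (-1 : ℤ) ≠ 0 by norm_num]
      push_cast
      ring
  by_cases h3 : j = -i
  · subst h3
    have e2 : 1 + i + -i ≠ 0 := by omega
    have e3 : 1 + -i ≠ 0 := by omega
    have e4 : i + (1 + -i) ≠ 0 := by omega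
    have e5 : -i ≠ 0 := by omega
    simp only [pe, i0, i1, e2, e3, e4, e5, if_true, if_false, one_ne_zero, add_neg_cancel, add_zero]
    push_cast
    ring
  by_cases h4 : j = -i - 1
  · subst h4
    have e1 : i + (-i - 1) ≠ 0 := by omega
    have e2 : 1 + i + (-i - 1) = 0 := by omega
    have e3 : 1 + (i + (-i - 1)) = 0 := by omega
    have e4 : i + (1 + (-i - 1)) = 0 := by omega
    have e5 : 1 + (-i - 1) ≠ 0 := by omega
    simp only [pe, i0, i1, e1, e2, e3, e4, e5, h1, if_true, if_false, one_ne_zero]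
    push_cast
    ring
  · have e1 : i + j ≠ 0 := by omega
    have e2 : 1 + i + j ≠ 0 := by omega
    have e3 : 1 + (i + j) ≠ 0 := by omega
    have e4 : i + (1 + j) ≠ 0 := by omega
    have e5 : 1 + j ≠ 0 := by omega
    simp only [pe, i0, i1, e1, e2, e3, e4, e5, h1, if_false, one_ne_zero]
    push_cast
    ring

theorem Sys.ind (T : Sys) (s : ℂ) (hs : ∀ i, T.supp i)
    (h1 : ∀ j x y, T.E 1 j x y = pe s 1 j x y) (n : ℕ) :
    ∀ j x y, T.E ((n : ℤ) + 1) j x y = pe s ((n : ℤ) + 1) j x y := by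
  induction n with
  | zero => simpa using h1
  | succ n ih =>
    intro j x z
    have hn : (n : ℂ) + 2 ≠ 0 := by exact_mod_cast Nat.succ_ne_zero (n + 1)
    obtain ⟨a, ha⟩ : ∃ a : ℂ, -z + ((n : ℂ) + 2) * a + s * (-n) = 1 :=
      ⟨(1 + z + s * n) / (n + 2), by field_simp; ring⟩
    have J := T.jac 1 ((n : ℤ) + 1) j (hs _) x a (z - a)
    have K := pe_jac s ((n : ℤ) + 1) j (by omega) x a (z - a)
    simp only [h1, ih] at J
    have e : pe s 1 ((n : ℤ) + 1) (-(a + (z - a))) a = 1 := by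
      have e1 : (1 : ℤ) + (n + 1) ≠ 0 := by omega
      have e2 : (n : ℤ) + 1 ≠ 0 := by omega
      simp only [pe, e1, e2, if_false, one_ne_zero]
      push_cast
      linear_combination ha
    rw [e, K] at J
    rw [add_sub_cancel] at J
    push_cast
    rw [show (n : ℤ) + 1 + 1 = 1 + (n + 1) by ring]
    push_cast at J
    have e' : -z + ((n : ℂ) + 1 + 1) * a + s * (1 - (n + 1)) = 1 := by linear_combination ha
    rw [e'] at J
    linear_combination -J

theorem Sys.L1 (S : Sys) (s : ℂ) (a : ℤ → ℂ) (ha : ∀ i, a i ≠ 0) (α β : ℕ → ℂ)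
    (hα0 : ∀ k, α k ≠ 0) (hβ0 : ∀ k, β k ≠ 0)
    (a0 : a 0 = 1) (a1 : a 1 = 1) (am1 : a (-1) = 1)
    (ap : ∀ k : ℕ, a ((k : ℤ) + 2) = a ((k : ℤ) + 1) * α k)
    (am : ∀ k : ℕ, a (-((k : ℤ) + 2)) = a (-((k : ℤ) + 1)) * β k)
    (h10 : ∀ x y, S.E 1 0 x y = 1)
    (h1m : ∀ x y, S.E 1 (-1) x y = (x + s) * (x + 2 * s))
    (hA : ∀ (k : ℕ) x y, S.E 1 ((k : ℤ) + 1) x y = α k * (x + (k + 2) * y - s * k))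
    (hB : ∀ (k : ℕ) x y, S.E 1 (-((k : ℤ) + 2)) x y = (β k)⁻¹ * (x - (k + 1) * y + s * (k + 3)))
    (j : ℤ) (x y : ℂ) :
    S.E 1 j x y * (a 1 * a j / a (1 + j)) = pe s 1 j x y := by
  by_cases h0 : j = 0
  · subst h0; simp [pe, h10, a0, a1]
  by_cases h1 : j = -1
  · subst h1; simp [pe, h1m, a0, a1, am1]
  rcases lt_or_gt_of_ne h0 with h | h
  · obtain ⟨k, rfl⟩ : ∃ k : ℕ, j = -((k : ℤ) + 2) := ⟨(-j - 2).toNat, by omega⟩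
    have e1 : (1 : ℤ) + -((k : ℤ) + 2) ≠ 0 := by omega
    have := ha (-((k : ℤ) + 1))
    have := hβ0 k
    simp only [pe, e1, h0, if_false, one_ne_zero]
    rw [hB, am, a1, show (1 : ℤ) + -((k : ℤ) + 2) = -((k : ℤ) + 1) by ring]
    push_cast
    field_simp
    ring
  · obtain ⟨k, rfl⟩ : ∃ k : ℕ, j = (k : ℤ) + 1 := ⟨(j - 1).toNat, by omega⟩
    have e1 : (1 : ℤ) + ((k : ℤ) + 1) ≠ 0 := by omega
    have := ha ((k : ℤ) + 1)
    have := hα0 k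
    simp only [pe, e1, h0, if_false, one_ne_zero]
    rw [hA, show (1 : ℤ) + ((k : ℤ) + 1) = (k : ℤ) + 2 by ring, ap, a1]
    push_cast
    field_simp
    ring

/-- scaling factors -/
def scl (A B : ℕ → ℂ) : ℤ → ℂ
  | Int.ofNat n => ∏ k ∈ Finset.range (n - 1), A k
  | Int.negSucc n => ∏ k ∈ Finset.range n, B k

theorem scl_pos (A B : ℕ → ℂ) (n : ℕ) : scl A B ((n : ℤ) + 1) = ∏ k ∈ Finset.range n, A k := rfl

theorem scl_neg (A B : ℕ → ℂ) (n : ℕ) : scl A B (-((n : ℤ) + 1)) = ∏ k ∈ Finset.range n, B k := by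
  rw [← Int.negSucc_eq]; rfl

theorem scl_ne (A B : ℕ → ℂ) (hA : ∀ k, A k ≠ 0) (hB : ∀ k, B k ≠ 0) (i : ℤ) : scl A B i ≠ 0 := by
  cases i <;> exact Finset.prod_ne_zero_iff.2 fun k _ => by first | exact hA k | exact hB k

theorem Sys.Norm.final {S : Sys} {s c : ℂ} (h : S.Norm (3 * s) c) :
    (∀ i, S.supp i) ∧ ∃ a : ℤ → ℂ, (∀ i, a i ≠ 0) ∧
      ∀ i j x y, S.E i j x y * (a i * a j / a (i + j)) = pe s i j x y := by
  have hc := h.c_eq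
  choose A hA0 hA1 hA2 hA3 hA4 using h.claim
  choose B hB0 hB1 hB2 hB3 hB4 using h.mirror.claim
  simp only [Sys.mirror, neg_zero, neg_neg, Nat.cast_add, Nat.cast_one] at hB1 hB2 hB3 hB4
  simp only [Nat.cast_add, Nat.cast_one] at hA1 hA2 hA3 hA4
  have hs : ∀ i, S.supp i := by
    intro i
    by_cases h0 : i = 0
    · subst h0; exact S.s0
    by_cases h1 : i = 1
    · subst h1; exact S.s1
    by_cases h2 : i = -1
    · subst h2; exact S.sm1
    rcases lt_or_gt_of_ne h0 with h | h
    · have := hB4 (-i - 2).toNat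
      rwa [show -(((-i - 2).toNat : ℤ) + 1 + 1) = i by omega] at this
    · have := hA4 (i - 2).toNat
      rwa [show (((i - 2).toNat : ℤ) + 1 + 1) = i by omega] at this
  refine ⟨hs, scl A B, scl_ne A B hA0 hB0, ?_⟩
  have h1m : ∀ x y, S.E 1 (-1) x y = (x + s) * (x + 2 * s) := fun x y => by
    rw [S.skew 1 (-1) (by simpa using S.s0), h.hm, hc]; ring
  have hE1 := S.L1 s (scl A B) (scl_ne A B hA0 hB0) A B hA0 hB0 rfl rfl rfl
    (fun k => by
      have := scl_pos A B (k + 1)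
      push_cast at this
      rw [show (k : ℤ) + 2 = k + 1 + 1 by ring, this, scl_pos, Finset.prod_range_succ])
    (fun k => by
      have := scl_neg A B (k + 1)
      push_cast at this
      rw [show (k : ℤ) + 2 = k + 1 + 1 by ring, this, scl_neg, Finset.prod_range_succ])
    h.h10 h1m
    (fun k x y => by rw [hA1]; ring)
    (fun k x y => by
      have := hB2 k x y
      rw [show (k : ℤ) + 2 = k + 1 + 1 by ring]
      linear_combination -this)
  have hEm := S.mirror.L1 s (fun i => scl A B (-i)) (fun i => scl_ne A B hA0 hB0 (-i)) B A hB0 hA0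
    rfl rfl rfl
    (fun k => by
      have := scl_neg A B (k + 1)
      push_cast at this
      rw [show (k : ℤ) + 2 = k + 1 + 1 by ring, this, scl_neg, Finset.prod_range_succ])
    (fun k => by
      have := scl_pos A B (k + 1)
      push_cast at this
      simp only [neg_neg]
      rw [show (k : ℤ) + 2 = k + 1 + 1 by ring, this, scl_pos, Finset.prod_range_succ])
    h.mirror.h10
    (fun x y => by
      simp only [Sys.mirror, neg_neg]
      rw [h.hm, hc]; ring)
    (fun k x y => by
      simp only [Sys.mirror]
      rw [hB1]; ring)
    (fun k x y => by
      have := hA2 k x y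
      simp only [Sys.mirror, neg_neg]
      rw [show (k : ℤ) + 2 = k + 1 + 1 by ring]
      linear_combination -this)
  set T := S.rescale (scl A B) (scl_ne A B hA0 hB0) with hT
  have hP := T.ind s hs hE1
  have hM := T.mirror.ind s (fun i => hs (-i)) (fun j x y => by
    rw [← hEm j x y]
    simp only [hT, Sys.mirror, Sys.rescale, neg_add]
    ring)
  intro i j x y
  change T.E i j x y = _
  by_cases h0 : i = 0
  · subst h0
    by_cases hj : j = 0
    · subst hj; rw [T.z00]; simp [pe]
    rw [T.skew 0 j (hs _)]
    have hpe : pe s 0 j x y = - pe s j 0 x (-y - x) := by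
      simp [pe, hj]
    rw [hpe]
    congr 1
    rcases lt_or_gt_of_ne hj with h | h
    · have := hM (-j - 1).toNat 0 x (-y - x)
      rw [show ((-j - 1).toNat : ℤ) + 1 = -j by omega] at this
      rw [← neg_neg j]
      have e := pe_neg s (-j) 0 x (-y - x)
      rw [neg_zero] at e
      rw [e, ← this]
      simp [Sys.mirror]
    · have := hP (j - 1).toNat 0 x (-y - x)
      rwa [show ((j - 1).toNat : ℤ) + 1 = j by omega] at this
  rcases lt_or_gt_of_ne h0 with h | h
  · have := hM (-i - 1).toNat (-j) x y
    rw [show ((-i - 1).toNat : ℤ) + 1 = -i by omega, pe_neg] at this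
    simp only [Sys.mirror, neg_neg] at this
    exact neg_injective this
  · have := hP (i - 1).toNat j x y
    rwa [show ((i - 1).toNat : ℤ) + 1 = i by omega] at this

end ECLProof

namespace ECLProof

theorem deg_aux (g p q : ℂ[X]) (hg : 2 ≤ g.natDegree)
    (h : ∀ a b, p.eval b * q.eval a = g.eval (a + b) - g.eval (a - b)) : g.natDegree = 2 := by
  have hp : ∀ a, p * Polynomial.C (q.eval a)
      = g.comp (Polynomial.C a + X) - g.comp (Polynomial.C a - X) := by
    intro a
    apply Polynomial.funext
    intro b
    simp [h a b]
  have h1 : ∀ a, p.derivative.eval 0 * q.eval a = 2 * g.derivative.eval a := by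
    intro a
    have := congrArg (fun r => (derivative r).eval 0) (hp a)
    simp [derivative_comp] at this
    linear_combination this
  have h3 : ∀ a, p.derivative.derivative.derivative.eval 0 * q.eval a
      = 2 * g.derivative.derivative.derivative.eval a := by
    intro a
    have := congrArg (fun r => (derivative (derivative (derivative r))).eval 0) (hp a)
    simp [derivative_comp] at this
    linear_combination this
  set k1 := p.derivative.eval 0
  set k3 := p.derivative.derivative.derivative.eval 0
  have hk : Polynomial.C k1 * g.derivative.derivative.derivative = Polynomial.C k3 * g.derivative := by
    apply Polynomial.funext
    intro a
    simp only [eval_mul, eval_C]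
    linear_combination (-k1 / 2) * h3 a + (k3 / 2) * h1 a
  have lead : g.coeff g.natDegree ≠ 0 := by
    rw [coeff_natDegree]
    intro h0
    rw [leadingCoeff_eq_zero] at h0
    rw [h0] at hg; simp at hg
  by_contra hne
  obtain ⟨m, hm⟩ : ∃ m, g.natDegree = m + 3 := ⟨g.natDegree - 3, by omega⟩
  rw [hm] at lead
  have m1 : (m : ℂ) + 1 ≠ 0 := by exact_mod_cast Nat.succ_ne_zero m
  have m2 : (m : ℂ) + 1 + 1 ≠ 0 := by exact_mod_cast Nat.succ_ne_zero (m + 1)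
  have m3 : (m : ℂ) + 1 + 1 + 1 ≠ 0 := by exact_mod_cast Nat.succ_ne_zero (m + 2)
  have c1 := congrArg (fun r => coeff r (m + 2)) hk
  have z : g.coeff (m + 2 + 1 + 1 + 1) = 0 := coeff_eq_zero_of_natDegree_lt (by omega)
  simp only [coeff_C_mul, coeff_derivative, z, zero_mul, mul_zero] at c1
  have k30 : k3 = 0 := by
    by_contra hk3
    push_cast at c1
    have : k3 * (g.coeff (m + 3) * ((m : ℂ) + 1 + 1 + 1)) = 0 := by
      linear_combination -c1
    simp [hk3, lead, m3] at this
  have c2 := congrArg (fun r => coeff r m) hk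
  simp only [coeff_C_mul, coeff_derivative, k30, zero_mul] at c2
  push_cast at c2
  have k10 : k1 = 0 := by
    by_contra hk1
    have : k1 * (g.coeff (m + 3) * ((m : ℂ) + 1 + 1 + 1) * ((m : ℂ) + 1 + 1) * ((m : ℂ) + 1)) = 0 := by
      linear_combination c2
    simp [hk1, lead, m3, m2, m1] at this
  have : derivative g = 0 := by
    apply Polynomial.funext
    intro a
    have := h1 a
    rw [k10] at this
    simp only [eval_zero]
    linear_combination (-1 / 2) * this
  have := Polynomial.derivative_eq_zero.1 this
  omega

theorem Sys.deg (S : Sys) (f : ℂ[X]) (hf : f.natDegree = 2)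
    (hE : ∀ x y, S.E (-1) 1 x y = f.eval x) (hne : ∃ x y, S.E 0 1 x y ≠ 0) :
    ∃ c : ℂ, c ≠ 0 ∧ (∀ x y, S.E 0 1 x y = c) ∧ ∀ x y, S.E 0 (-1) x y = -c := by
  have f0 : f ≠ 0 := by rintro rfl; simp at hf
  have k0 : ∀ a b x, S.E 0 1 (x + b) a = - S.E 0 (-1) (-(a + b)) a := by
    intro a b
    obtain ⟨r, hr⟩ := S.poly 0 1 (X + Polynomial.C b) (Polynomial.C a)
    simp only [eval_add, eval_X, eval_C] at hr
    have : (r + Polynomial.C (S.E 0 (-1) (-(a + b)) a)) * f = 0 := by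
      apply Polynomial.funext
      intro x
      have J := S.jac' 0 (-1) 1 (ij := -1) (jk := 0) (ik := 1) (t := 0) (by norm_num) (by norm_num)
        (by norm_num) (by norm_num) S.s0 x a b
      simp only [S.z00, hE, hr] at J
      simp only [eval_mul, eval_add, eval_C, eval_zero]
      linear_combination -J
    have := (mul_eq_zero.1 this).resolve_right f0
    intro x
    have := congrArg (eval x) this
    simp only [eval_add, eval_C, eval_zero] at this
    rw [hr]; linear_combination this
  obtain ⟨φ, hφ⟩ := S.poly 0 1 0 X
  simp only [eval_X, eval_zero] at hφ
  have hm : ∀ x a, S.E 0 (-1) x a = - φ.eval a := by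
    intro x a
    have := k0 a (-a - x) (a + x)
    rw [show a + x + (-a - x) = 0 by ring, show -(a + (-a - x)) = x by ring, hφ] at this
    linear_combination this
  have h1 : ∀ x a, S.E 0 1 x a = φ.eval a := by
    intro x a
    have := k0 a 0 x
    rw [hm, add_zero] at this
    rw [this]; ring
  have φ0 : φ ≠ 0 := by
    rintro rfl
    obtain ⟨x, y, h⟩ := hne
    exact h (by rw [h1]; simp)
  obtain ⟨p, hp⟩ := S.poly 1 1 0 X
  obtain ⟨q, hq⟩ := S.poly (-1) 2 (-X) X
  simp only [eval_X, eval_zero, eval_neg] at hp hq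
  have hd : (f.comp (-X) * φ).natDegree = 2 + φ.natDegree := by
    have : f.comp (-X) ≠ 0 := by
      intro h
      have h2 := congrArg (fun r => r.comp (-X)) h
      simp [comp_assoc] at h2
      exact f0 h2
    rw [natDegree_mul this φ0, natDegree_comp, hf, natDegree_neg, natDegree_X, mul_one]
  have hd2 := deg_aux (f.comp (-X) * φ) p q (by omega) (by
    intro a b
    have J := S.jac' (-1) 1 1 (ij := 0) (jk := 2) (ik := 0) (t := 1) (by norm_num) (by norm_num)
        (by norm_num) (by norm_num) S.s1 (-a) a b
    rw [neg_add_cancel, hp, hq, hE, hE, h1, S.skew 1 0 (by simpa using S.s1), h1] at J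
    simp only [eval_mul, eval_comp, eval_neg, eval_X]
    rw [J, show -b - -a = a - b by ring, show -a + b = -(a - b) by ring]
    ring)
  have : φ.natDegree = 0 := by omega
  obtain ⟨c, rfl⟩ := Polynomial.natDegree_eq_zero.1 this
  refine ⟨c, fun h => φ0 (by simp [h]), fun x y => by rw [h1]; simp, fun x y => by rw [hm]; simp⟩

theorem Sys.main (S : Sys) (f : ℂ[X]) (hf : f.natDegree = 2)
    (hE : ∀ x y, S.E (-1) 1 x y = f.eval x) (hne : ∃ x y, S.E 0 1 x y ≠ 0) :
    (∀ i, S.supp i) ∧ ∃ s : ℂ, ∃ a : ℤ → ℂ, (∀ i, a i ≠ 0) ∧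
      ∀ i j x y, S.E i j x y * (a i * a j / a (i + j)) = pe s i j x y := by
  obtain ⟨c, c0, hc1, hc2⟩ := S.deg f hf hE hne
  have l0 : f.coeff 2 ≠ 0 := by
    rw [← hf, coeff_natDegree]
    intro h0
    rw [leadingCoeff_eq_zero] at h0
    rw [h0] at hf; simp at hf
  set l := f.coeff 2 with hl
  obtain ⟨d, hd⟩ : ∃ d : ℤ → ℂ, d = fun i => if i = 0 then -1 / c else if i = -1 then 1 / (c * l) else 1 :=
    ⟨_, rfl⟩
  have d0 : ∀ i, d i ≠ 0 := by
    intro i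
    rw [hd]; dsimp only
    split_ifs <;> simp [c0, l0]
  have e0 : d 0 = -1 / c := by simp [hd]
  have em : d (-1) = 1 / (c * l) := by simp [hd]
  have e1 : d 1 = 1 := by simp [hd]
  have hN : (S.rescale d d0).Norm (3 * (f.coeff 1 / l / 3)) (f.coeff 0 / l) := by
    refine ⟨fun x y => ?_, fun x y => ?_, fun x y => ?_⟩
    · change S.E 0 1 x y * (d 0 * d 1 / d (0 + 1)) = -1
      rw [hc1, e0, zero_add, e1]; field_simp
    · change S.E 0 (-1) x y * (d 0 * d (-1) / d (0 + (-1))) = 1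
      rw [hc2, zero_add, e0, em]; field_simp
    · change S.E (-1) 1 x y * (d (-1) * d 1 / d (-1 + 1)) = _
      rw [hE, neg_add_cancel, e0, e1, em, eval_eq_sum_range, hf]
      simp only [Finset.sum_range_succ, Finset.sum_range_zero, ← hl]
      field_simp
      ring
  obtain ⟨hs, a, ha, H⟩ := hN.final
  refine ⟨hs, f.coeff 1 / l / 3, fun i => a i * d i, fun i => mul_ne_zero (ha i) (d0 i), ?_⟩
  intro i j x y
  rw [← H i j x y]
  change _ = S.E i j x y * (d i * d j / d (i + j)) * _
  have := d0 (i + j)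
  have := ha (i + j)
  field_simp

end ECLProof

namespace ECLProof

variable {L : Type} [AddCommGroup L] [Module ℂ L]

theorem funext2 (p q : ℂ[X][X])
    (h : ∀ x y : ℂ, (p.eval (Polynomial.C y)).eval x = (q.eval (Polynomial.C y)).eval x) :
    p = q := by
  apply Polynomial.eq_of_infinite_eval_eq
  refine Set.Infinite.mono ?_ (Set.infinite_range_of_injective (Polynomial.C_injective (R := ℂ)))
  rintro _ ⟨y, rfl⟩
  exact Polynomial.funext fun x => h x y

theorem pECL_eval (s : ℂ) (i j : ℤ) (x y : ℂ) :
    ((pECL s i j).eval (Polynomial.C y)).eval x = pe s i j x y := by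
  unfold pECL pe
  split_ifs <;> simp [Pc, Pd, Pl]

theorem free (C : ClassV L) (hs : ∀ i, C.G i ≠ ⊥) (a : ℤ → ℂ) (ha : ∀ i, a i ≠ 0) :
    C.toLieConformalAlgebra.IsFreePolyBasis (fun i => a i • C.bas i) := by
  have hmem : ∀ i (k : ℕ), (⇑C.D)^[k] (C.bas i) ∈ C.G i := by
    intro i k
    rw [C.bas_span i (hs i)]
    exact Submodule.subset_span ⟨k, rfl⟩
  let b : ∀ i, Module.Basis ℕ ℂ (C.G i) := fun i =>
    (Module.Basis.span (C.bas_indep i (hs i))).map (LinearEquiv.ofEq _ _ (C.bas_span i (hs i)).symm)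
  have hb : ∀ i k, ((b i k : C.G i) : L) = (⇑C.D)^[k] (C.bas i) := by
    intro i k
    simp [b, Module.Basis.span_apply]
  let B := ((C.internal.collectedBasis b).reindex (Equiv.sigmaEquivProd ℤ ℕ)).unitsSMul
    (fun q => Units.mk0 (a q.1) (ha q.1))
  have hB : (fun q : ℤ × ℕ => (⇑C.D)^[q.2] (a q.1 • C.bas q.1)) = ⇑B := by
    funext q
    simp only [B, Module.Basis.unitsSMul_apply, Module.Basis.reindex_apply,
      DirectSum.IsInternal.collectedBasis_coe]
    rw [← Module.End.pow_apply, map_smul, Module.End.pow_apply, ← hb]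
    rfl
  refine ⟨?_, ?_⟩
  · rw [hB]; exact B.linearIndependent
  · rw [hB]; exact B.span_eq

theorem fin (C : ClassV L)
    (hmem₁ : (C.sp (-1) 1).natDegree = 0)
    (hdeg₁ : ((C.sp (-1) 1).coeff 0).natDegree = 2) :
    ∃ s : ℂ, C.toLieConformalAlgebra.IsECL s := by
  have hE : ∀ x y, (toSys C).E (-1) 1 x y = ((C.sp (-1) 1).coeff 0).eval x := by
    intro x y
    change ((C.sp (-1) 1).eval (Polynomial.C y)).eval x = _
    conv_lhs => rw [eq_C_of_natDegree_eq_zero hmem₁]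
    simp
  have hne : ∃ x y, (toSys C).E 0 1 x y ≠ 0 := by
    by_contra h
    push Not at h
    apply C.ne_01
    apply funext2
    intro x y
    have := h x y
    change ((C.sp 0 1).eval (Polynomial.C y)).eval x = 0 at this
    rw [this]; simp
  obtain ⟨hs, s, a, ha, H⟩ := (toSys C).main _ hdeg₁ hE hne
  refine ⟨s, fun i => a i • C.bas i, free C hs a ha, ?_⟩
  intro i j n
  have key : Pc (a i * a j) * C.sp i j = Pc (a (i + j)) * pECL s i j := by
    apply funext2
    intro x y
    have h1 := H i j x y
    change ((C.sp i j).eval (Polynomial.C y)).eval x * _ = _ at h1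
    have := ha (i + j)
    simp only [eval_mul, pECL_eval, Pc, eval_C]
    rw [← h1]
    field_simp
  have kn := congrArg (fun r => coeff r n) key
  simp only [Pc, coeff_C_mul] at kn
  rw [← Polynomial.smul_eq_C_mul, ← Polynomial.smul_eq_C_mul] at kn
  have e := C.sp_brkt i j n
  change _ = _ • C.applyP _ _ at e
  rw [applyP_eq] at e ⊢
  have k2 := congrArg (fun r => aeval C.D r (C.bas (i + j))) kn
  simp only [map_smul, LinearMap.smul_apply] at k2
  simp only [map_smul, LinearMap.smul_apply, e]
  rw [← k2]
  module

end ECLProof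
/-- a class `𝒱` algebra with `deg p_{-1,1}(∂) = 2` is isomorphic
to `ECL(s)` for some `s ∈ ℂ`. -/
theorem classV_deg_two_ECL
    {L : Type} [AddCommGroup L] [Module ℂ L] (C : ClassV L)
    (hmem₁ : (C.sp (-1) 1).natDegree = 0)
    (hdeg₁ : ((C.sp (-1) 1).coeff 0).natDegree = 2) :
    ∃ s : ℂ, C.toLieConformalAlgebra.IsECL s := by
  exact ECLProof.fin C hmem₁ hdeg₁
end
end

section
/- Let L be a ℤ-graded Lie conformal algebra of class 𝒱 with deg p_{0,1}(λ) = 2. Then L is isomorphic, as a Lie conformal algebra, to SCL₂(0,s) for some s ∈ ℂ. -/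
open scoped BigOperators Classical ENNReal
open Polynomial

noncomputable section

namespace LieConformalAlgebra

variable {L : Type} [AddCommGroup L] [Module ℂ L]

theorem aux_applyP (C : LieConformalAlgebra L) (q : ℂ[X]) (x : L) :
    C.applyP q x = (aeval C.D q) x := by
  unfold applyP
  rw [aeval_eq_sum_range, Polynomial.sum_over_range]
  · simp [LinearMap.sum_apply, Module.End.pow_apply]
  · simp

/-- The bracket at a complex value of `λ`. -/
def br (C : LieConformalAlgebra L) (l : ℂ) (a b : L) : L :=
  ∑ᶠ n : ℕ, (l ^ n * ((Nat.factorial n : ℂ))⁻¹) • C.prd n a b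

theorem br_eq (C : LieConformalAlgebra L) (l : ℂ) (a b : L) (N : ℕ)
    (h : ∀ n, N ≤ n → C.prd n a b = 0) :
    C.br l a b = ∑ n ∈ Finset.range N, (l ^ n * ((Nat.factorial n : ℂ))⁻¹) • C.prd n a b := by
  apply finsum_eq_sum_of_support_subset
  intro n hn
  by_contra hc
  simp at hc
  exact hn (by simp [h n hc])

theorem br_add_right (C : LieConformalAlgebra L) (l : ℂ) (a b c : L) :
    C.br l a (b + c) = C.br l a b + C.br l a c := by
  obtain ⟨N, hN⟩ := C.bound a b
  obtain ⟨M, hM⟩ := C.bound a c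
  rw [C.br_eq l a b (max N M) (fun n hn => hN n (by omega)),
    C.br_eq l a c (max N M) (fun n hn => hM n (by omega)),
    C.br_eq l a (b + c) (max N M) (fun n hn => by
      rw [map_add, hN n (by omega), hM n (by omega), add_zero]), ← Finset.sum_add_distrib]
  simp

theorem br_smul_right (C : LieConformalAlgebra L) (l : ℂ) (a b : L) (t : ℂ) :
    C.br l a (t • b) = t • C.br l a b := by
  obtain ⟨N, hN⟩ := C.bound a b
  rw [C.br_eq l a b N hN, C.br_eq l a (t • b) N (fun n hn => by
      rw [map_smul, hN n hn, smul_zero]), Finset.smul_sum]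
  refine Finset.sum_congr rfl fun n _ => ?_
  rw [map_smul, smul_comm]

theorem br_add_left (C : LieConformalAlgebra L) (l : ℂ) (a b c : L) :
    C.br l (a + b) c = C.br l a c + C.br l b c := by
  obtain ⟨N, hN⟩ := C.bound a c
  obtain ⟨M, hM⟩ := C.bound b c
  rw [C.br_eq l a c (max N M) (fun n hn => hN n (by omega)),
    C.br_eq l b c (max N M) (fun n hn => hM n (by omega)),
    C.br_eq l (a + b) c (max N M) (fun n hn => by
      rw [map_add, LinearMap.add_apply, hN n (by omega), hM n (by omega), add_zero]),
    ← Finset.sum_add_distrib]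
  simp

theorem br_smul_left (C : LieConformalAlgebra L) (l : ℂ) (a b : L) (t : ℂ) :
    C.br l (t • a) b = t • C.br l a b := by
  obtain ⟨N, hN⟩ := C.bound a b
  rw [C.br_eq l a b N hN, C.br_eq l (t • a) b N (fun n hn => by
      rw [map_smul, LinearMap.smul_apply, hN n hn, smul_zero]), Finset.smul_sum]
  refine Finset.sum_congr rfl fun n _ => ?_
  rw [map_smul, LinearMap.smul_apply, smul_comm]

/-- `br` as a bilinear map. -/
def brL (C : LieConformalAlgebra L) (l : ℂ) : L →ₗ[ℂ] L →ₗ[ℂ] L :=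
  LinearMap.mk₂ ℂ (C.br l) (C.br_add_left l) (fun t a b => C.br_smul_left l a b t)
    (C.br_add_right l) (fun t a b => C.br_smul_right l a b t)

theorem aux_fact (l : ℂ) (n : ℕ) :
    l ^ (n + 1) * ((Nat.factorial (n + 1) : ℂ))⁻¹ * ((n + 1 : ℕ) : ℂ)
      = l * (l ^ n * ((Nat.factorial n : ℂ))⁻¹) := by
  rw [Nat.factorial_succ]
  have h1 : ((n + 1 : ℕ) : ℂ) ≠ 0 := by exact_mod_cast Nat.succ_ne_zero n
  have h2 : (Nat.factorial n : ℂ) ≠ 0 := by exact_mod_cast Nat.factorial_ne_zero n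
  rw [Nat.cast_mul]
  field_simp
  ring

theorem br_D_left (C : LieConformalAlgebra L) (l : ℂ) (a b : L) :
    C.br l (C.D a) b = -l • C.br l a b := by
  obtain ⟨N, hN⟩ := C.bound a b
  rw [C.br_eq l a b N hN, C.br_eq l (C.D a) b (N + 1) (fun n hn => by
      rw [C.sesq, hN _ (by omega), smul_zero]), Finset.sum_range_succ', Finset.smul_sum]
  rw [C.sesq]
  simp only [Nat.cast_zero, neg_zero, zero_smul, smul_zero, add_zero]
  refine Finset.sum_congr rfl fun n _ => ?_
  rw [C.sesq, smul_smul, smul_smul, Nat.add_sub_cancel]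
  congr 1
  have := aux_fact l n
  linear_combination -this

theorem br_D_right (C : LieConformalAlgebra L) (l : ℂ) (a b : L) :
    C.br l a (C.D b) = C.D (C.br l a b) + l • C.br l a b := by
  obtain ⟨N, hN⟩ := C.bound a b
  rw [C.br_eq l a (C.D b) (N + 1) (fun n hn => by
      rw [C.sesq', hN _ (by omega), hN _ (by omega), smul_zero, map_zero, add_zero])]
  simp only [C.sesq', smul_add]
  rw [Finset.sum_add_distrib]
  congr 1
  · rw [C.br_eq l a b (N + 1) (fun n hn => hN n (by omega)), map_sum]
    simp only [map_smul]
  · rw [C.br_eq l a b N hN, Finset.sum_range_succ', Finset.smul_sum]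
    simp only [Nat.cast_zero, zero_smul, smul_zero, add_zero]
    refine Finset.sum_congr rfl fun n _ => ?_
    rw [smul_smul, smul_smul, Nat.add_sub_cancel]
    congr 1
    exact aux_fact l n

theorem br_poly_left (C : LieConformalAlgebra L) (l : ℂ) (a b : L) (q : ℂ[X]) :
    C.br l (aeval C.D q a) b = q.eval (-l) • C.br l a b := by
  induction q using Polynomial.induction_on' with
  | add p q hp hq =>
    rw [map_add, LinearMap.add_apply, br_add_left, hp, hq, eval_add, add_smul]
  | monomial n t =>
    induction n with
    | zero => simp [br_smul_left, Algebra.algebraMap_eq_smul_one]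
    | succ n ih =>
      rw [← monomial_mul_X, mul_comm, map_mul, aeval_X, Module.End.mul_apply, br_D_left, ih,
        smul_smul, eval_mul, eval_X]

theorem br_poly_right (C : LieConformalAlgebra L) (l : ℂ) (a b : L) (q : ℂ[X]) :
    C.br l a (aeval C.D q b) = aeval C.D (q.comp (X + Polynomial.C l)) (C.br l a b) := by
  induction q using Polynomial.induction_on' with
  | add p q hp hq =>
    rw [map_add, LinearMap.add_apply, br_add_right, hp, hq, add_comp, map_add,
      LinearMap.add_apply]
  | monomial n t =>
    induction n with
    | zero => simp [br_smul_right, Algebra.algebraMap_eq_smul_one]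
    | succ n ih =>
      rw [← monomial_mul_X, mul_comm, map_mul, aeval_X, Module.End.mul_apply, br_D_right, ih,
        mul_comp, X_comp, map_mul, Module.End.mul_apply]
      simp [Algebra.algebraMap_eq_smul_one, smul_comm l t]

theorem br_sum_right (C : LieConformalAlgebra L) (l : ℂ) (a : L) (s : Finset ℕ) (t : ℕ → ℂ)
    (v : ℕ → L) : C.br l a (∑ n ∈ s, t n • v n) = ∑ n ∈ s, t n • C.br l a (v n) := by
  have := map_sum (C.brL l a) (fun n => t n • v n) s
  simp only [map_smul] at this
  exact this

theorem br_sum_left (C : LieConformalAlgebra L) (l : ℂ) (a : L) (s : Finset ℕ) (t : ℕ → ℂ)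
    (v : ℕ → L) : C.br l (∑ n ∈ s, t n • v n) a = ∑ n ∈ s, t n • C.br l (v n) a := by
  have := map_sum ((C.brL l).flip a) (fun n => t n • v n) s
  simp only [map_smul] at this
  exact this

theorem aux_unif (P : ℕ → ℕ → Prop) (h : ∀ j, ∃ N, ∀ k, N ≤ k → P j k) (K : ℕ) :
    ∃ N, ∀ j < K, ∀ k, N ≤ k → P j k := by
  choose F hF using h
  refine ⟨(Finset.range K).sup F, fun j hj k hk => hF j k (le_trans ?_ hk)⟩
  exact Finset.le_sup (f := F) (by simpa using hj)

theorem aux_binom (l m : ℂ) (k : ℕ) :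
    ∑ t ∈ Finset.range (k + 1), (l ^ t * ((Nat.factorial t : ℂ))⁻¹) *
      (m ^ (k - t) * ((Nat.factorial (k - t) : ℂ))⁻¹)
      = (l + m) ^ k * ((Nat.factorial k : ℂ))⁻¹ := by
  rw [add_pow, Finset.sum_mul]
  refine Finset.sum_congr rfl fun t ht => ?_
  have ht' : t ≤ k := by simp at ht; omega
  rw [Nat.cast_choose ℂ ht']
  have h1 : (Nat.factorial k : ℂ) ≠ 0 := by exact_mod_cast Nat.factorial_ne_zero k
  have h2 : (Nat.factorial t : ℂ) ≠ 0 := by exact_mod_cast Nat.factorial_ne_zero t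
  have h3 : (Nat.factorial (k - t) : ℂ) ≠ 0 := by exact_mod_cast Nat.factorial_ne_zero (k - t)
  field_simp

theorem br_jacobi (C : LieConformalAlgebra L) (l m : ℂ) (a b c : L) :
    C.br l a (C.br m b c) = C.br (l + m) (C.br l a b) c + C.br m b (C.br l a c) := by
  obtain ⟨N1, h1⟩ := C.bound b c
  obtain ⟨N2, h2⟩ := C.bound a c
  obtain ⟨N3, h3⟩ := C.bound a b
  obtain ⟨K, hK⟩ : ∃ K, K = N1 + N2 + N3 := ⟨_, rfl⟩
  obtain ⟨M1, k1⟩ := aux_unif _ (fun n => C.bound a (C.prd n b c)) K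
  obtain ⟨M2, k2⟩ := aux_unif _ (fun n => C.bound b (C.prd n a c)) K
  obtain ⟨M3, k3⟩ := aux_unif _ (fun n => C.bound (C.prd n a b) c) K
  obtain ⟨N', hN'⟩ : ∃ K', K' = M1 + M2 + M3 + K := ⟨_, rfl⟩
  have g1 : ∀ n k, N' ≤ k → C.prd k a (C.prd n b c) = 0 := fun n k hk => by
    by_cases hn : n < K
    · exact k1 n hn k (by omega)
    · rw [h1 n (by omega), map_zero]
  have g2 : ∀ n k, N' ≤ k → C.prd k b (C.prd n a c) = 0 := fun n k hk => by
    by_cases hn : n < K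
    · exact k2 n hn k (by omega)
    · rw [h2 n (by omega), map_zero]
  have g3 : ∀ n k, N' ≤ k → C.prd k (C.prd n a b) c = 0 := fun n k hk => by
    by_cases hn : n < K
    · exact k3 n hn k (by omega)
    · rw [h3 n (by omega), map_zero, LinearMap.zero_apply]
  obtain ⟨M, hM⟩ : ∃ M, M = N' + K := ⟨_, rfl⟩
  have e1 : C.br l a (C.br m b c) = ∑ p ∈ Finset.range M, ∑ n ∈ Finset.range M,
      ((l ^ p * ((Nat.factorial p : ℂ))⁻¹) * (m ^ n * ((Nat.factorial n : ℂ))⁻¹)) •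
        C.prd p a (C.prd n b c) := by
    rw [C.br_eq m b c M (fun n hn => h1 n (by omega)), br_sum_right, Finset.sum_comm]
    refine Finset.sum_congr rfl fun n _ => ?_
    rw [C.br_eq l a _ M (fun k hk => g1 n k (by omega)), Finset.smul_sum]
    refine Finset.sum_congr rfl fun p _ => ?_
    rw [smul_smul, mul_comm]
  have e2 : C.br m b (C.br l a c) = ∑ p ∈ Finset.range M, ∑ n ∈ Finset.range M,
      ((l ^ p * ((Nat.factorial p : ℂ))⁻¹) * (m ^ n * ((Nat.factorial n : ℂ))⁻¹)) •
        C.prd n b (C.prd p a c) := by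
    rw [C.br_eq l a c M (fun n hn => h2 n (by omega)), br_sum_right]
    refine Finset.sum_congr rfl fun n _ => ?_
    rw [C.br_eq m b _ M (fun k hk => g2 n k (by omega)), Finset.smul_sum]
    refine Finset.sum_congr rfl fun p _ => ?_
    rw [smul_smul]
  have e3 : C.br (l + m) (C.br l a b) c = ∑ p ∈ Finset.range M, ∑ n ∈ Finset.range M,
      ((l ^ p * ((Nat.factorial p : ℂ))⁻¹) * (m ^ n * ((Nat.factorial n : ℂ))⁻¹)) •
        ∑ j ∈ Finset.range (p + 1), (Nat.choose p j : ℂ) • C.prd (p + n - j) (C.prd j a b) c := by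
    obtain ⟨F, hF⟩ : ∃ F : ℕ → ℕ → L, ∀ j t, F j t = ∑ n ∈ Finset.range M,
          (((l ^ j * ((Nat.factorial j : ℂ))⁻¹) * (l ^ t * ((Nat.factorial t : ℂ))⁻¹)) *
            (m ^ n * ((Nat.factorial n : ℂ))⁻¹)) • C.prd (t + n) (C.prd j a b) c :=
      ⟨_, fun _ _ => rfl⟩
    have : ∀ p, ∑ n ∈ Finset.range M,
      ((l ^ p * ((Nat.factorial p : ℂ))⁻¹) * (m ^ n * ((Nat.factorial n : ℂ))⁻¹)) •
        ∑ j ∈ Finset.range (p + 1), (Nat.choose p j : ℂ) • C.prd (p + n - j) (C.prd j a b) c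
        = ∑ j ∈ Finset.range (p + 1), F j (p - j) := by
      intro p
      simp only [Finset.smul_sum, hF]
      rw [Finset.sum_comm]
      refine Finset.sum_congr rfl fun j hj => Finset.sum_congr rfl fun n _ => ?_
      have hj' : j ≤ p := by simp at hj; omega
      rw [smul_smul, show p + n - j = p - j + n by omega]
      congr 1
      rw [Nat.cast_choose ℂ hj']
      have h1 : (Nat.factorial p : ℂ) ≠ 0 := by exact_mod_cast Nat.factorial_ne_zero p
      have h2 : (Nat.factorial j : ℂ) ≠ 0 := by exact_mod_cast Nat.factorial_ne_zero j
      have h3 : (Nat.factorial (p - j) : ℂ) ≠ 0 := by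
        exact_mod_cast Nat.factorial_ne_zero (p - j)
      have h4 : l ^ p = l ^ j * l ^ (p - j) := by rw [← pow_add]; congr 1; omega
      rw [h4]
      field_simp
    rw [Finset.sum_congr rfl fun p _ => this p, Finset.sum_range_diag_flip,
      C.br_eq l a b M (fun n hn => h3 n (by omega)), br_sum_left]
    refine Finset.sum_congr rfl fun j _ => ?_
    simp only [hF]
    by_cases hj : K ≤ j
    · simp only [h3 j (by omega), map_zero, LinearMap.zero_apply, smul_zero,
        Finset.sum_const_zero]
      rw [C.br_eq _ 0 c 0 (by simp)]
      simp
    · rw [C.br_eq (l + m) _ c N' (fun k hk => g3 j k hk)]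
      obtain ⟨H, hH⟩ : ∃ H : ℕ → ℕ → L, ∀ t n, H t n = ((l ^ t * ((Nat.factorial t : ℂ))⁻¹) *
            (m ^ n * ((Nat.factorial n : ℂ))⁻¹)) • C.prd (t + n) (C.prd j a b) c :=
        ⟨_, fun _ _ => rfl⟩
      have : ∀ k, ((l + m) ^ k * ((Nat.factorial k : ℂ))⁻¹) • C.prd k (C.prd j a b) c
          = ∑ t ∈ Finset.range (k + 1), H t (k - t) := by
        intro k
        rw [← aux_binom, Finset.sum_smul]
        refine Finset.sum_congr rfl fun t ht => ?_
        have ht' : t ≤ k := by simp at ht; omega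
        rw [hH, show t + (k - t) = k by omega]
      rw [Finset.sum_congr rfl fun k _ => this k, Finset.sum_range_diag_flip, Finset.smul_sum]
      simp only [hH]
      have s1 : Finset.range N' ⊆ Finset.range (M - j) := by
        intro x hx; simp at hx ⊢; omega
      rw [← Finset.sum_subset s1]
      · refine Finset.sum_congr rfl fun t ht => ?_
        have s2 : Finset.range (N' - t) ⊆ Finset.range M := by
          intro x hx; simp at hx ⊢; omega
        rw [← Finset.sum_subset s2, Finset.smul_sum]
        · refine Finset.sum_congr rfl fun n _ => ?_
          rw [smul_smul]
          congr 1
          ring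
        · intro n _ hn
          rw [g3 j (t + n) (by simp at hn; omega), smul_zero]
      · intro t _ ht
        refine Finset.sum_eq_zero fun n _ => ?_
        rw [g3 j (t + n) (by simp at ht; omega), smul_zero]
  rw [e1, e2, e3, ← Finset.sum_add_distrib]
  refine Finset.sum_congr rfl fun p _ => ?_
  rw [← Finset.sum_add_distrib]
  refine Finset.sum_congr rfl fun n _ => ?_
  rw [← C.jacobi, ← smul_add, sub_add_cancel]

end LieConformalAlgebra


namespace RankOneContext

variable {L : Type} [AddCommGroup L] [Module ℂ L]

theorem poly_inj0 (C : RankOneContext L) (k : ℤ) (hk : C.G k ≠ ⊥) (q : ℂ[X])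
    (h : aeval C.D q (C.bas k) = 0) : q = 0 := by
  have hi := C.bas_indep k hk
  rw [linearIndependent_iff'] at hi
  rw [aeval_eq_sum_range] at h
  simp only [LinearMap.sum_apply, LinearMap.smul_apply, Module.End.pow_apply] at h
  ext n
  by_cases hn : n ∈ Finset.range (q.natDegree + 1)
  · simpa using hi _ _ h n hn
  · simp at hn
    rw [coeff_eq_zero_of_natDegree_lt (by omega), coeff_zero]

theorem poly_inj (C : RankOneContext L) (k : ℤ) (hk : C.G k ≠ ⊥) (q q' : ℂ[X])
    (h : aeval C.D q (C.bas k) = aeval C.D q' (C.bas k)) : q = q' := by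
  rw [← sub_eq_zero]
  apply C.poly_inj0 k hk
  rw [map_sub, LinearMap.sub_apply, h, sub_self]

theorem sp_brkt' (C : RankOneContext L) (i j : ℤ) (n : ℕ) :
    C.prd n (C.bas i) (C.bas j)
      = (Nat.factorial n : ℂ) • aeval C.D ((C.sp i j).coeff n) (C.bas (i + j)) := by
  rw [C.sp_brkt, ← C.toLieConformalAlgebra.aux_applyP]
  rfl

theorem br_bas (C : RankOneContext L) (i j : ℤ) (l : ℂ) :
    C.toLieConformalAlgebra.br l (C.bas i) (C.bas j)
      = aeval C.D ((C.sp i j).eval (Polynomial.C l)) (C.bas (i + j)) := by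
  rw [C.toLieConformalAlgebra.br_eq l _ _ ((C.sp i j).natDegree + 1), eval_eq_sum_range, map_sum,
    LinearMap.sum_apply]
  · refine Finset.sum_congr rfl fun n _ => ?_
    rw [C.sp_brkt', smul_smul, mul_assoc, inv_mul_cancel₀ (by exact_mod_cast n.factorial_ne_zero),
      mul_one, mul_comm, map_mul, map_pow, aeval_C, ← map_pow, Module.End.mul_apply]
    rw [Algebra.algebraMap_eq_smul_one]
    rfl
  · intro n hn
    rw [C.sp_brkt', coeff_eq_zero_of_natDegree_lt (by omega)]
    simp

/-- values of the structure polynomials -/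
def E (C : RankOneContext L) (i j : ℤ) (x y : ℂ) : ℂ := evalEval x y (C.sp i j)

theorem E_jacobi (C : RankOneContext L) (i j k : ℤ) (x l m : ℂ) :
    C.E j k (x + l) m * C.E i (j + k) x l
      = C.E i j (-l - m) l * C.E (i + j) k x (l + m) + C.E i k (x + m) l * C.E j (i + k) x m := by
  by_cases hz : C.G (i + j + k) = ⊥
  · have h1 : C.sp i (j + k) = 0 := C.sp_zero _ _ (Or.inr (Or.inr (by rw [← add_assoc]; exact hz)))
    have h2 : C.sp (i + j) k = 0 := C.sp_zero _ _ (Or.inr (Or.inr hz))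
    have h3 : C.sp j (i + k) = 0 := C.sp_zero _ _ (Or.inr (Or.inr (by
      rw [show j + (i + k) = i + j + k by ring]; exact hz)))
    simp [E, h1, h2, h3]
  have key := C.toLieConformalAlgebra.br_jacobi l m (C.bas i) (C.bas j) (C.bas k)
  simp only [br_bas, LieConformalAlgebra.br_poly_left, LieConformalAlgebra.br_poly_right] at key
  rw [show i + (j + k) = i + j + k by ring, show j + (i + k) = i + j + k by ring,
    ← LinearMap.smul_apply, ← map_smul, ← Module.End.mul_apply, ← Module.End.mul_apply,
    ← map_mul, ← map_mul, ← LinearMap.add_apply, ← map_add] at key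
  have := congrArg (Polynomial.eval x) (C.poly_inj _ hz _ _ key)
  simp only [eval_mul, eval_add, eval_smul, eval_comp, eval_X, eval_C, smul_eq_mul] at this
  simp only [E, evalEval]
  rw [show -l - m = -(l + m) by ring]
  exact this

theorem E_skew (C : RankOneContext L) (i j : ℤ) (x y : ℂ) :
    C.E i j x y = - C.E j i x (-y - x) := by
  by_cases hz : C.G (i + j) = ⊥
  · have h1 : C.sp i j = 0 := C.sp_zero _ _ (Or.inr (Or.inr hz))
    have h2 : C.sp j i = 0 := C.sp_zero _ _ (Or.inr (Or.inr (by rw [add_comm]; exact hz)))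
    simp [E, h1, h2]
  obtain ⟨K, hK⟩ : ∃ K, K = (C.sp i j).natDegree + (C.sp j i).natDegree + 1 := ⟨_, rfl⟩
  have hq : ∀ n, K ≤ n → (C.sp j i).coeff n = 0 := fun n hn =>
    coeff_eq_zero_of_natDegree_lt (by omega)
  have h0 : ∀ n : ℕ, (C.sp i j).coeff n = - ∑ k ∈ Finset.range (K - n),
      ((-1 : ℂ) ^ (n + k) * (Nat.choose (n + k) n : ℂ)) • (X ^ k * (C.sp j i).coeff (n + k)) := by
    intro n
    apply C.poly_inj _ hz
    have hs := C.skew n (C.bas i) (C.bas j)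
    rw [finsum_eq_sum_of_support_subset (s := Finset.range (K - n))] at hs
    · rw [C.sp_brkt'] at hs
      have hn : (Nat.factorial n : ℂ) ≠ 0 := by exact_mod_cast n.factorial_ne_zero
      have hs2 := congrArg (fun z => (Nat.factorial n : ℂ)⁻¹ • z) hs
      simp only [smul_smul, inv_mul_cancel₀ hn, one_smul] at hs2
      rw [hs2, smul_neg, map_neg, LinearMap.neg_apply, map_sum, LinearMap.sum_apply,
        Finset.smul_sum]
      congr 1
      refine Finset.sum_congr rfl fun k _ => ?_
      rw [C.sp_brkt', map_smul, LinearMap.smul_apply, map_mul, map_pow, aeval_X,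
        Module.End.mul_apply, add_comm j i, ← Module.End.pow_apply, map_smul, smul_smul, smul_smul]
      congr 1
      have hk : (Nat.factorial k : ℂ) ≠ 0 := by exact_mod_cast k.factorial_ne_zero
      rw [Nat.cast_add_choose]
      field_simp
    · intro k hk
      by_contra hc
      simp at hc
      apply hk
      simp only
      rw [C.sp_brkt', hq (n + k) (by omega)]
      simp
  have e1 : C.E i j x y = ∑ n ∈ Finset.range K, y ^ n * ((C.sp i j).coeff n).eval x := by
    unfold E evalEval
    rw [eval_eq_sum_range' (p := C.sp i j) (n := K) (by omega), eval_finsetSum]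
    refine Finset.sum_congr rfl fun n _ => ?_
    simp [mul_comm]
  have e2 : ∀ z, C.E j i x z = ∑ n ∈ Finset.range K, z ^ n * ((C.sp j i).coeff n).eval x := by
    intro z
    unfold E evalEval
    rw [eval_eq_sum_range' (p := C.sp j i) (n := K) (by omega), eval_finsetSum]
    refine Finset.sum_congr rfl fun n _ => ?_
    simp [mul_comm]
  obtain ⟨F, hF⟩ : ∃ F : ℕ → ℕ → ℂ, ∀ n k, F n k = y ^ n * ((-1 : ℂ) ^ (n + k) *
      (Nat.choose (n + k) n : ℂ) * (x ^ k * ((C.sp j i).coeff (n + k)).eval x)) :=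
    ⟨_, fun _ _ => rfl⟩
  have e3 : C.E i j x y = - ∑ n ∈ Finset.range K, ∑ k ∈ Finset.range (K - n), F n k := by
    rw [e1, ← Finset.sum_neg_distrib]
    refine Finset.sum_congr rfl fun n _ => ?_
    rw [h0, eval_neg, eval_finsetSum, mul_neg, Finset.mul_sum]
    congr 1
    refine Finset.sum_congr rfl fun k _ => ?_
    simp [hF]
  rw [e3, e2, ← Finset.sum_range_diag_flip]
  congr 1
  refine Finset.sum_congr rfl fun m _ => ?_
  rw [show -y - x = (-1) * (y + x) by ring, mul_pow, add_pow, Finset.mul_sum, Finset.sum_mul]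
  refine Finset.sum_congr rfl fun n hn => ?_
  have hn' : n ≤ m := by simp at hn; omega
  rw [hF, show n + (m - n) = m by omega]
  ring

theorem prd_zero_of_sp (C : RankOneContext L) (i j : ℤ) (h : C.sp i j = 0) (n : ℕ) (a b : L)
    (ha : a ∈ C.G i) (hb : b ∈ C.G j) : C.prd n a b = 0 := by
  by_cases hi : C.G i = ⊥
  · rw [hi] at ha
    rw [(Submodule.mem_bot ℂ).1 ha]; simp
  by_cases hj : C.G j = ⊥
  · rw [hj] at hb
    rw [(Submodule.mem_bot ℂ).1 hb]; simp
  have h0 : ∀ n, C.prd n (C.bas i) (C.bas j) = 0 := fun n => by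
    rw [C.sp_brkt', h]; simp
  have h1 : ∀ k n, C.prd n ((⇑C.D)^[k] (C.bas i)) (C.bas j) = 0 := by
    intro k
    induction k with
    | zero => exact h0
    | succ k ih =>
      intro n
      rw [Function.iterate_succ_apply', C.sesq, ih, smul_zero]
  have h2 : ∀ l k n, C.prd n ((⇑C.D)^[k] (C.bas i)) ((⇑C.D)^[l] (C.bas j)) = 0 := by
    intro l
    induction l with
    | zero => exact h1
    | succ l ih =>
      intro k n
      rw [Function.iterate_succ_apply', C.sesq', ih, ih, smul_zero, map_zero, add_zero]
  rw [C.bas_span i hi] at ha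
  rw [C.bas_span j hj] at hb
  induction ha using Submodule.span_induction with
  | mem a ha =>
    obtain ⟨k, rfl⟩ := ha
    induction hb using Submodule.span_induction with
    | mem b hb => obtain ⟨l, rfl⟩ := hb; exact h2 l k n
    | zero => simp
    | add x y _ _ hx hy => rw [map_add, hx, hy, add_zero]
    | smul t x _ hx => rw [map_smul, hx, smul_zero]
  | zero => simp
  | add x y _ _ hx hy => rw [map_add, LinearMap.add_apply, hx, hy, add_zero]
  | smul t x _ hx => rw [map_smul, LinearMap.smul_apply, hx, smul_zero]

end RankOneContext

namespace ClassV

variable {L : Type} [AddCommGroup L] [Module ℂ L]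

theorem gen_induction (C : ClassV L) (good : ℤ → Prop) (h1 : good 1) (h0 : good 0)
    (hm : good (-1)) (hadd : ∀ i j, good i → good j → C.sp i j ≠ 0 → good (i + j))
    (i : ℤ) (hi : C.G i ≠ ⊥) : good i := by
  have hle : ∀ i, good i → C.G i ≤ ⨆ (i : ℤ) (_ : good i), C.G i := fun i hi =>
    le_iSup₂_of_le i hi le_rfl
  have hN := C.genV (⨆ (i : ℤ) (_ : good i), C.G i) ?_ ?_ (hle _ h1) (hle _ h0) (hle _ hm)
  · by_contra hc
    apply hi
    have hd := C.internal.submodule_iSupIndep i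
    rw [disjoint_iff_inf_le] at hd
    rw [eq_bot_iff]
    refine le_trans (le_inf le_rfl ?_) hd
    have : (⨆ (i : ℤ) (_ : good i), C.G i) ≤ ⨆ (j : ℤ) (_ : j ≠ i), C.G j := by
      refine iSup₂_le fun j hj => le_iSup₂_of_le j ?_ le_rfl
      rintro rfl; exact hc hj
    exact le_trans (by rw [hN]; exact le_top) this
  · intro x hx
    have : (⨆ (i : ℤ) (_ : good i), C.G i) ≤
        (⨆ (i : ℤ) (_ : good i), C.G i).comap C.D :=
      iSup₂_le fun j hj y hy => hle j hj (C.dGrade j y hy)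
    exact this hx
  · intro n a ha b hb
    have key : ∀ a, ∀ i, good i → a ∈ C.G i → (⨆ (i : ℤ) (_ : good i), C.G i) ≤
        (⨆ (i : ℤ) (_ : good i), C.G i).comap (C.prd n a) := by
      intro a i hi ha
      refine iSup₂_le fun j hj y hy => ?_
      rw [Submodule.mem_comap]
      by_cases hs : C.sp i j = 0
      · rw [C.prd_zero_of_sp i j hs n a y ha hy]; exact Submodule.zero_mem _
      · exact hle _ (hadd i j hi hj hs) (C.prdGrade i j n a ha y hy)
    have key2 : (⨆ (i : ℤ) (_ : good i), C.G i) ≤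
        (⨆ (i : ℤ) (_ : good i), C.G i).comap ((C.prd n).flip b) := by
      refine iSup₂_le fun j hj y hy => ?_
      exact key y j hj hy hb
    exact key2 ha

end ClassV


theorem aux_shift (Q c : ℂ[X]) (B l : ℂ) (hc : c ≠ 0)
    (h : ∀ x, Q.eval x * c.eval (x + l) = B * c.eval x) (x : ℂ) : Q.eval x = B := by
  have hp : Q * taylor l c = Polynomial.C B * c := by
    apply Polynomial.funext
    intro x
    simp only [eval_mul, taylor_eval, eval_C]
    exact h x
  by_cases hQ : Q = 0
  · rw [hQ, zero_mul] at hp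
    have := (mul_eq_zero.1 hp.symm).resolve_right hc
    rw [hQ, eval_zero]
    exact (C_eq_zero.1 this).symm
  have ht : taylor l c ≠ 0 := by
    intro h0
    apply hc
    rwa [taylor_eq_zero] at h0
  have h1 : Q.natDegree + c.natDegree ≤ c.natDegree := by
    rw [← natDegree_taylor c l, ← natDegree_mul hQ ht, hp, natDegree_taylor]
    exact natDegree_C_mul_le _ _
  obtain ⟨q, rfl⟩ := natDegree_eq_zero.1 (show Q.natDegree = 0 by omega)
  have h2 := congrArg (fun p => coeff p c.natDegree) hp
  simp only [coeff_C_mul, coeff_taylor_natDegree, coeff_natDegree] at h2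
  rw [eval_C]
  exact mul_right_cancel₀ (leadingCoeff_ne_zero.2 hc) h2

theorem aux_evalEval_map (p : ℂ[X][X]) (x y : ℂ) :
    evalEval x y p = (p.map (evalRingHom x)).eval y := by
  rw [map_evalRingHom_eval]

theorem aux_coeff_taylor (p : ℂ[X]) (N : ℕ) (hN : p.natDegree ≤ N) (l : ℂ) :
    (taylor l p).coeff N = p.coeff N := by
  rcases hN.lt_or_eq with h | h
  · rw [coeff_eq_zero_of_natDegree_lt h, coeff_eq_zero_of_natDegree_lt (by
      rw [natDegree_taylor]; exact h)]
  · subst h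
    rw [coeff_taylor_natDegree, coeff_natDegree]

theorem aux_lead (p : ℂ[X][X]) (hp : p ≠ 0) (Q : ℂ[X]) (B₁ B₂ l : ℂ)
    (h : ∀ x m, Q.eval x * evalEval (x + l) m p
      = B₁ * evalEval x (l + m) p + B₂ * evalEval x m p) (x : ℂ) : Q.eval x = B₁ + B₂ := by
  refine aux_shift Q p.leadingCoeff (B₁ + B₂) l (leadingCoeff_ne_zero.2 hp) ?_ x
  intro x
  have hpoly : Polynomial.C (Q.eval x) * p.map (evalRingHom (x + l))
      = Polynomial.C B₁ * taylor l (p.map (evalRingHom x))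
        + Polynomial.C B₂ * p.map (evalRingHom x) := by
    apply Polynomial.funext
    intro m
    have := h x m
    simp only [aux_evalEval_map] at this
    simp only [eval_mul, eval_add, taylor_eval, eval_C]
    rw [this, add_comm l m]
  have h2 := congrArg (fun q => coeff q p.natDegree) hpoly
  simp only [coeff_C_mul, coeff_add] at h2
  rw [aux_coeff_taylor _ _ (natDegree_map_le) l] at h2
  simp only [coeff_map, coeff_natDegree, coe_evalRingHom] at h2
  rw [h2]
  ring

theorem aux_affine (q : ℂ[X]) (h : ∀ l y, q.eval (l + y) - q.eval l - q.eval y + q.eval 0 = 0) :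
    ∃ q₀ q₁ : ℂ, ∀ x, q.eval x = q₀ + q₁ * x := by
  have hp : q.comp (Polynomial.C 2 * X) = Polynomial.C 2 * q - Polynomial.C (q.eval 0) := by
    apply Polynomial.funext
    intro x
    simp only [eval_comp, eval_mul, eval_sub, eval_C, eval_X]
    have := h x x
    rw [← two_mul] at this
    linear_combination this
  have hd : q.natDegree ≤ 1 := by
    rw [natDegree_le_iff_coeff_eq_zero]
    intro n hn
    have := congrArg (fun q => coeff q n) hp
    simp only [comp_C_mul_X_coeff, coeff_sub, coeff_C_mul] at this
    rw [coeff_C_of_ne_zero (by omega), sub_zero, mul_comm] at this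
    by_contra hc
    have h2 := mul_right_cancel₀ hc this
    have h3 : 2 ^ n = 2 := by exact_mod_cast h2
    have h4 : 2 ^ 1 < 2 ^ n := Nat.pow_lt_pow_right (by norm_num) hn
    omega
  refine ⟨q.coeff 0, q.coeff 1, fun x => ?_⟩
  rw [eval_eq_sum_range' (n := 2) (by omega)]
  simp [Finset.sum_range_succ]

theorem aux_cont (p : ℂ[X][X]) : Continuous fun z : ℂ × ℂ => evalEval z.1 z.2 p := by
  have : (fun z : ℂ × ℂ => evalEval z.1 z.2 p)
      = fun z => ∑ n ∈ Finset.range (p.natDegree + 1), (p.coeff n).eval z.1 * z.2 ^ n := by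
    funext z
    unfold evalEval
    rw [eval_eq_sum_range (p := p), eval_finsetSum]
    simp
  rw [this]
  fun_prop

theorem aux_ext (p q : ℂ[X][X]) (h : ∀ x y, evalEval x y p = evalEval x y q) : p = q := by
  rw [← sub_eq_zero]
  by_contra hc
  have h1 : (p - q).leadingCoeff = 0 := by
    apply Polynomial.funext
    intro x
    have : (p - q).map (evalRingHom x) = 0 := by
      apply Polynomial.funext
      intro y
      rw [← aux_evalEval_map, evalEval_sub, h, sub_self, eval_zero]
    have h2 := congrArg (fun r => coeff r (p - q).natDegree) this
    simp only [coeff_map, coeff_natDegree, coe_evalRingHom, coeff_zero] at h2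
    rw [h2, eval_zero]
  exact hc (leadingCoeff_eq_zero.1 h1)

theorem aux_quad_cancel (α β γ : ℂ) (hα : α ≠ 0) (F : ℂ → ℂ) (hF : Continuous F)
    (h : ∀ l, (α * l ^ 2 + β * l + γ) * F l = 0) (l : ℂ) : F l = 0 := by
  let f : ℂ[X] := Polynomial.C α * X ^ 2 + Polynomial.C β * X + Polynomial.C γ
  have hf : f ≠ 0 := by
    intro h0
    have := congrArg (fun q => coeff q 2) h0
    simp [f] at this
    exact hα this
  have hfin : (f.rootSet ℂ).Finite := f.rootSet_finite ℂ
  have hd := hfin.countable.dense_compl ℝ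
  have := Continuous.ext_on hd hF continuous_const (g := fun _ => 0) ?_
  · rw [this]
  · intro l hl
    have hl' : f.eval l ≠ 0 := by
      intro h0
      apply hl
      rw [mem_rootSet]
      exact ⟨hf, by simpa using h0⟩
    have := h l
    refine (mul_eq_zero.1 this).resolve_left ?_
    simpa [f] using hl'


/-- The numerical identities satisfied by the structure polynomials. -/
structure CoreData (p : ℤ → ℤ → ℂ[X][X]) (S : ℤ → Prop) (α β γ : ℂ) : Prop where
  hα : α ≠ 0
  jac : ∀ (i j k : ℤ) (x l m : ℂ),
    evalEval (x + l) m (p j k) * evalEval x l (p i (j + k))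
      = evalEval (-l - m) l (p i j) * evalEval x (l + m) (p (i + j) k)
        + evalEval (x + m) l (p i k) * evalEval x m (p j (i + k))
  skew : ∀ (i j : ℤ) (x y : ℂ), evalEval x y (p i j) = - evalEval x (-y - x) (p j i)
  zero : ∀ i j : ℤ, (¬ S i ∨ ¬ S j ∨ ¬ S (i + j)) → p i j = 0
  row0 : ∀ i : ℤ, S i → ∀ x l : ℂ, evalEval x l (p 0 i) = i * (α * l ^ 2 + β * l + γ)
  s0 : S 0
  s1 : S 1
  sm : S (-1)
  ne : p 1 (-1) ≠ 0

namespace CoreData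

variable {p : ℤ → ℤ → ℂ[X][X]} {S : ℤ → Prop} {α β γ : ℂ}

theorem flip (H : CoreData p S α β γ) :
    CoreData (fun i j => p (-i) (-j)) (fun i => S (-i)) (-α) (-β) (-γ) where
  hα := neg_ne_zero.2 H.hα
  jac i j k x l m := by
    have := H.jac (-i) (-j) (-k) x l m
    simp only [← neg_add] at this
    exact this
  skew i j x y := H.skew (-i) (-j) x y
  zero i j h := H.zero (-i) (-j) (by rw [← neg_add]; exact h)
  row0 i hi x l := by
    have := H.row0 (-i) hi x l
    simp only [neg_zero]
    rw [this]
    push_cast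
    ring
  s0 := by simpa using H.s0
  s1 := H.sm
  sm := by simpa using H.s1
  ne := by
    intro h
    rw [neg_neg] at h
    apply H.ne
    apply aux_ext
    intro x y
    rw [H.skew, h]
    simp

theorem stepB (H : CoreData p S α β γ) (i j : ℤ) (x l m : ℂ) :
    ((i : ℂ) + j) * evalEval (x + l) m (p i j)
      = i * evalEval x (l + m) (p i j) + j * evalEval x m (p i j) := by
  by_cases hp : p i j = 0
  · simp [hp]
  have hS : S i ∧ S j ∧ S (i + j) := by
    by_contra hc
    apply hp
    apply H.zero
    tauto
  obtain ⟨hi, hj, hij⟩ := hS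
  have := aux_quad_cancel α β γ H.hα (fun l => ((i : ℂ) + j) * evalEval (x + l) m (p i j)
      - (i * evalEval x (l + m) (p i j) + j * evalEval x m (p i j))) ?_ ?_ l
  · exact sub_eq_zero.1 this
  · have hc := aux_cont (p i j)
    have c1 : Continuous fun l : ℂ => evalEval (x + l) m (p i j) :=
      hc.comp (g := fun z : ℂ × ℂ => evalEval z.1 z.2 (p i j)) (f := fun l : ℂ => (x + l, m))
        (by fun_prop)
    have c2 : Continuous fun l : ℂ => evalEval x (l + m) (p i j) :=
      hc.comp (g := fun z : ℂ × ℂ => evalEval z.1 z.2 (p i j)) (f := fun l : ℂ => (x, l + m))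
        (by fun_prop)
    fun_prop
  · intro l
    have hJ := H.jac 0 i j x l m
    rw [H.row0 _ hij, H.row0 _ hi, H.row0 _ hj, zero_add, zero_add] at hJ
    push_cast at hJ
    linear_combination hJ

theorem stepC (H : CoreData p S α β γ) (j : ℤ) (h0 : j ≠ 0) (h1 : j ≠ -1) :
    ∃ a b : ℂ, ∀ x y, evalEval x y (p 1 j) = a * (x + (1 + j) * y) + b := by
  have hB := fun x l m => H.stepB 1 j x l m
  push_cast at hB
  have hj : (j : ℂ) ≠ 0 := by exact_mod_cast h0
  have hk : (1 + j : ℂ) ≠ 0 := by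
    have : (1 + j : ℤ) ≠ 0 := by omega
    exact_mod_cast this
  have e1 : ∀ x y, evalEval x y (p 1 j) = (1 + j) * ((p 1 j).eval (Polynomial.C 0)).eval (x + y)
      - j * ((p 1 j).eval (Polynomial.C 0)).eval x := by
    intro x y
    have := hB x y 0
    rw [add_zero] at this
    unfold evalEval at this ⊢
    linear_combination -this
  obtain ⟨q₀, q₁, hq⟩ := aux_affine ((p 1 j).eval (Polynomial.C 0)) (by
    intro l y
    have := hB 0 l y
    rw [e1 (0 + l) y, e1 0 (l + y), e1 0 y] at this
    simp only [zero_add] at this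
    have h2 : (j : ℂ) * (1 + j) ≠ 0 := mul_ne_zero hj hk
    apply mul_left_cancel₀ h2
    linear_combination this)
  refine ⟨q₁, q₀, fun x y => ?_⟩
  rw [e1, hq, hq]
  ring

theorem stepC' (H : CoreData p S α β γ) (j : ℤ) (h0 : j ≠ 0) (h1 : j ≠ 1) :
    ∃ a b : ℂ, ∀ x y, evalEval x y (p (-1) j) = a * (x + (1 - j) * y) + b := by
  obtain ⟨a, b, h⟩ := H.flip.stepC (-j) (by omega) (by omega)
  refine ⟨a, b, fun x y => ?_⟩
  have := h x y
  simp only [neg_neg] at this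
  rw [this]
  push_cast
  ring

theorem row_one_zero (H : CoreData p S α β γ) (x y : ℂ) :
    evalEval x y (p 1 0) = -(α * (-y - x) ^ 2 + β * (-y - x) + γ) := by
  rw [H.skew, H.row0 1 H.s1]
  push_cast
  ring

theorem start (H : CoreData p S α β γ) :
    ∃ g : ℂ, g ≠ 0 ∧ (∀ x y, evalEval x y (p 1 (-1)) = g) ∧ ∃ a c d : ℂ, a * c = α * g ∧
      a * d = - g * β ∧ (∀ x y, evalEval x y (p 1 1) = a * (x + 2 * y)) ∧
      ∀ x y, evalEval x y (p (-1) 2) = c * (x - y) + d := by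
  obtain ⟨a, b, hab⟩ := H.stepC 1 (by norm_num) (by norm_num)
  obtain ⟨c, d, hcd⟩ := H.stepC' 2 (by norm_num) (by norm_num)
  have hb : b = 0 := by
    have := H.skew 1 1 0 0
    rw [hab, hab] at this
    push_cast at this
    linear_combination this / 2
  obtain ⟨G, hG⟩ : ∃ G : ℂ[X], G = (p 1 (-1)).eval (Polynomial.C 0) := ⟨_, rfl⟩
  have hGe : ∀ x y, evalEval x y (p 1 (-1)) = G.eval x := by
    intro x y
    have := H.stepB 1 (-1) x y 0
    push_cast at this
    rw [hG, add_zero] at *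
    unfold evalEval at this ⊢
    linear_combination -this
  have hG0 : G ≠ 0 := by
    intro h0
    apply H.ne
    apply aux_ext
    intro x y
    rw [hGe, h0]
    simp
  have hmain : ∀ u, G.eval u * (α * u ^ 2 - β * u + γ)
      = G.eval 0 * γ + a * d * u + a * c * u ^ 2 := by
    intro u
    have := H.jac 1 (-1) 1 u 0 0
    have e1 := H.row_one_zero u 0
    have e2 := H.row0 1 H.s1 u (0 + 0)
    have e3 := H.skew (-1) 1 (u + 0) 0
    norm_num at this e1 e2 e3
    rw [e3, e1, e2, hGe, hGe, hab, hcd, hb] at this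
    push_cast at this
    linear_combination this
  have hdeg : G.natDegree = 0 := by
    have hpoly : G * (Polynomial.C α * X ^ 2 + Polynomial.C (-β) * X + Polynomial.C γ)
        = Polynomial.C (a * c) * X ^ 2 + Polynomial.C (a * d) * X
          + Polynomial.C (G.eval 0 * γ) := by
      apply Polynomial.funext
      intro u
      have := hmain u
      simp only [eval_mul, eval_add, eval_C, eval_X, eval_pow]
      linear_combination this
    have hd := congrArg natDegree hpoly
    have h2 := natDegree_quadratic (a := α) (b := -β) (c := γ) H.hα
    rw [natDegree_mul hG0 (by intro h0; rw [h0] at h2; simp at h2), h2] at hd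
    have h3 := natDegree_quadratic_le (a := a * c) (b := a * d) (c := G.eval 0 * γ)
    omega
  obtain ⟨g, rfl⟩ := natDegree_eq_zero.1 hdeg
  simp only [eval_C] at hmain hGe
  refine ⟨g, by simpa using hG0, hGe, a, c, d, ?_, ?_, ?_, ?_⟩
  · linear_combination -(hmain 1 + hmain (-1) - 2 * hmain 0) / 2
  · linear_combination -(hmain 1 - hmain (-1)) / 2
  · intro x y
    rw [hab, hb]; push_cast; ring
  · intro x y
    rw [hcd]; push_cast; ring

theorem pos (H : CoreData p S α β γ) (s g : ℂ) (hs : β = -3 * s * α) (hg0 : g ≠ 0)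
    (hg : ∀ x y, evalEval x y (p 1 (-1)) = g) (n : ℕ) :
    S (n + 2) ∧ ∃ a c : ℂ, a * c = α * g ∧
      (∀ x y, evalEval x y (p 1 (n + 1)) = a * (x + (n + 2) * y - s * n)) ∧
      (∀ x y, evalEval x y (p (-1) (n + 2)) = c * (x - (n + 1) * y + s * (n + 3))) ∧
      (1 ≤ n → γ = 2 * s ^ 2 * α) := by
  induction n with
  | zero =>
    obtain ⟨g', _, hg', a, c, d, hac, had, h1, h2⟩ := H.start
    obtain rfl : g = g' := by rw [← hg 0 0, hg']
    have hne : a * c ≠ 0 := by rw [hac]; exact mul_ne_zero H.hα hg0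
    have ha : a ≠ 0 := left_ne_zero_of_mul hne
    refine ⟨?_, a, c, hac, ?_, ?_, by simp⟩
    · by_contra hc
      have := H.zero 1 1 (Or.inr (Or.inr (by simpa using hc)))
      have h3 := h1 1 0
      rw [this] at h3
      simp at h3
      exact ha h3.symm
    · intro x y
      have := h1 x y
      norm_num
      rw [this]
    · intro x y
      have hd : d = 3 * s * c := by
        apply mul_left_cancel₀ ha
        rw [had, hs]
        linear_combination -3 * s * hac
      have := h2 x y
      norm_num
      rw [this, hd]
      ring
  | succ n ih =>
    obtain ⟨hS, a, c, hac, h1, h2, -⟩ := ih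
    obtain ⟨A, B, hAB⟩ := H.stepC (n + 2) (by omega) (by omega)
    obtain ⟨c2, d2, hcd⟩ := H.stepC' (n + 3) (by omega) (by omega)
    have hJ : ∀ x l m : ℂ, c * (x + l - (n + 1) * m + s * (n + 3)) * (a * (x + (n + 2) * l - s * n))
        = g * ((n + 2) * (α * (l + m) ^ 2 + β * (l + m) + γ))
          + (A * (x + m + (n + 3) * l) + B) * (c2 * (x - (n + 2) * m) + d2) := by
      intro x l m
      have := H.jac 1 (-1) (n + 2) x l m
      rw [show (-1 : ℤ) + (n + 2) = n + 1 by ring, show (1 : ℤ) + (n + 2) = n + 3 by ring,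
        show (1 : ℤ) + -1 = 0 by ring, H.row0 _ hS, hg, h1, h2, hAB, hcd] at this
      push_cast at this
      linear_combination this
    have hn2 : (n + 2 : ℂ) ≠ 0 := by exact_mod_cast (by omega : n + 2 ≠ 0)
    have hn3 : (n + 3 : ℂ) ≠ 0 := by exact_mod_cast (by omega : n + 3 ≠ 0)
    have r1 : A * c2 = α * g := by
      rw [← hac]
      linear_combination -(hJ 1 0 0 + hJ (-1) 0 0 - 2 * hJ 0 0 0) / 2
    have hne : A * c2 ≠ 0 := by rw [r1]; exact mul_ne_zero H.hα hg0
    have hA : A ≠ 0 := left_ne_zero_of_mul hne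
    have hc2 : c2 ≠ 0 := right_ne_zero_of_mul hne
    have r2 : A * d2 + B * c2 = 3 * s * (α * g) := by
      rw [← hac]
      linear_combination -(hJ 1 0 0 - hJ (-1) 0 0) / 2
    have r3 : A * d2 = s * (n + 4) * (α * g) := by
      apply mul_left_cancel₀ hn3
      linear_combination -(hJ 0 1 0 - hJ 0 (-1) 0) / 2 + (s * (n + 2) * (n + 3) - s * n) * hac
        - g * (n + 2) * hs
    have r4 : d2 = c2 * (s * (n + 4)) := by
      apply mul_left_cancel₀ hA
      rw [r3]
      linear_combination -s * (n + 4) * r1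
    have r5 : B = - A * (s * (n + 1)) := by
      apply mul_right_cancel₀ hc2
      linear_combination r2 - r3 + s * (n + 1) * r1
    have r6 : γ = 2 * s ^ 2 * α := by
      have := hJ 0 0 0
      rw [r5, r4] at this
      apply mul_left_cancel₀ (mul_ne_zero hg0 hn2)
      linear_combination -this - s ^ 2 * n * (n + 3) * hac + s ^ 2 * (n + 1) * (n + 4) * r1
    push_cast
    refine ⟨?_, A, c2, r1, ?_, ?_, fun _ => r6⟩
    · by_contra hc
      have := H.zero 1 (n + 2) (Or.inr (Or.inr (by
        rw [show (1 : ℤ) + (n + 2) = n + 1 + 2 by ring]; exact hc)))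
      have h3 := hAB 1 0
      have h4 := hAB 0 0
      rw [this] at h3 h4
      simp at h3 h4
      rw [h4] at h3
      simp at h3
      exact hA h3
    · intro x y
      rw [show (n : ℤ) + 1 + 1 = n + 2 by ring, hAB, r5]
      push_cast
      ring
    · intro x y
      rw [show (n : ℤ) + 1 + 2 = n + 3 by ring, hcd, r4]
      push_cast
      ring

end CoreData


/-- Numerical structure functions of the model algebra. -/
def ModF (s : ℂ) (i j : ℤ) (x y : ℂ) : ℂ :=
  (if i = 0 then 2 * s - y else 1) * (if j = 0 then x + y + 2 * s else 1) *
    (if i + j = 0 then (i : ℂ) else i * x + (i + j) * y + s * (i - j))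

theorem ModF_gen (s : ℂ) (i j : ℤ) (x y : ℂ) (hi : i ≠ 0) (hj : j ≠ 0) (hij : i + j ≠ 0) :
    ModF s i j x y = i * x + (i + j) * y + s * (i - j) := by
  simp [ModF, hi, hj, hij]

theorem ModF_zr (s : ℂ) (i j : ℤ) (x y : ℂ) (hi : i ≠ 0) (hj : j = 0) :
    ModF s i j x y = (x + y + 2 * s) * (i * (x + y + s)) := by
  subst hj
  simp [ModF, hi]
  left
  ring

theorem ModF_zl (s : ℂ) (i j : ℤ) (x y : ℂ) (hi : i = 0) :
    ModF s i j x y = (2 * s - y) * (j * (y - s)) := by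
  subst hi
  by_cases hj : j = 0
  · subst hj; simp [ModF]
  · simp [ModF, hj]
    left
    ring

theorem ModF_opp (s : ℂ) (i j : ℤ) (x y : ℂ) (hi : i ≠ 0) (hij : i + j = 0) :
    ModF s i j x y = i := by
  have : j ≠ 0 := by omega
  simp [ModF, hi, hij, this]

theorem ModF_jac (s : ℂ) (u i k : ℤ) (x l m : ℂ) (hu : u ≠ 0) (hi : i ≠ 0) (hui : u + i ≠ 0) :
    ModF s i k (x + l) m * ModF s u (i + k) x l
      = ModF s u i (-l - m) l * ModF s (u + i) k x (l + m)
        + ModF s u k (x + m) l * ModF s i (u + k) x m := by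
  rw [ModF_gen s u i _ _ hu hi hui]
  by_cases h0 : k = 0
  · rw [ModF_zr s i k _ _ hi h0, ModF_zr s (u + i) k _ _ hui h0, ModF_zr s u k _ _ hu h0,
      ModF_gen s u (i + k) _ _ hu (by omega) (by omega),
      ModF_gen s i (u + k) _ _ hi (by omega) (by omega)]
    subst h0
    push_cast
    ring
  by_cases h1 : i + k = 0
  · rw [ModF_opp s i k _ _ hi h1, ModF_zr s u (i + k) _ _ hu h1,
      ModF_gen s (u + i) k _ _ hui h0 (by omega)]
    obtain rfl : k = -i := by omega
    by_cases h2 : u + -i = 0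
    · rw [ModF_opp s u (-i) _ _ hu h2, ModF_zr s i (u + -i) _ _ hi h2]
      obtain rfl : u = i := by omega
      push_cast
      ring
    · rw [ModF_gen s u (-i) _ _ hu h0 h2, ModF_gen s i (u + -i) _ _ hi h2 (by omega)]
      push_cast
      ring
  rw [ModF_gen s i k _ _ hi h0 h1]
  by_cases h2 : u + k = 0
  · rw [ModF_opp s u k _ _ hu h2, ModF_zr s i (u + k) _ _ hi h2,
      ModF_gen s (u + i) k _ _ hui h0 (by omega), ModF_gen s u (i + k) _ _ hu h1 (by omega)]
    obtain rfl : k = -u := by omega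
    push_cast
    ring
  rw [ModF_gen s u k _ _ hu h0 h2]
  by_cases h3 : u + i + k = 0
  · rw [ModF_opp s u (i + k) _ _ hu (by omega), ModF_opp s (u + i) k _ _ hui h3,
      ModF_opp s i (u + k) _ _ hi (by omega)]
    obtain rfl : k = -(u + i) := by omega
    push_cast
    ring
  rw [ModF_gen s u (i + k) _ _ hu h1 (by omega), ModF_gen s (u + i) k _ _ hui h0 h3,
    ModF_gen s i (u + k) _ _ hi h2 (by omega)]
  push_cast
  ring

namespace CoreData

variable {p : ℤ → ℤ → ℂ[X][X]} {S : ℤ → Prop} {α β γ : ℂ}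

theorem stepT (H : CoreData p S α β γ) (s : ℂ) (r : ℤ → ℂ) (hr : ∀ i, r i ≠ 0) (u i : ℤ)
    (hu : u ≠ 0) (hi : i ≠ 0) (hui : u + i ≠ 0)
    (Tu : ∀ j x y, r u * r j * evalEval x y (p u j) = r (u + j) * ModF s u j x y)
    (Ti : ∀ j x y, r i * r j * evalEval x y (p i j) = r (i + j) * ModF s i j x y) :
    ∀ j x y, r (u + i) * r j * evalEval x y (p (u + i) j)
      = r (u + i + j) * ModF s (u + i) j x y := by
  intro k x n
  have hc : ((u : ℂ) + i) ≠ 0 := by exact_mod_cast hui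
  obtain ⟨l, hl⟩ : ∃ l : ℂ, ModF s u i (-n) l = 1 := by
    refine ⟨(1 + u * n - s * (u - i)) / (u + i), ?_⟩
    rw [ModF_gen s u i _ _ hu hi hui]
    field_simp
    ring
  obtain ⟨m, rfl⟩ : ∃ m, n = l + m := ⟨n - l, by ring⟩
  have hJ := H.jac u i k x l m
  have hM := ModF_jac s u i k x l m hu hi hui
  rw [show -l - m = -(l + m) by ring] at hJ hM
  have t1 := Ti k (x + l) m
  have t2 := Tu (i + k) x l
  have t3 := Tu i (-(l + m)) l
  have t4 := Tu k (x + m) l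
  have t5 := Ti (u + k) x m
  rw [show u + (i + k) = u + i + k by ring] at t2
  rw [show i + (u + k) = u + i + k by ring] at t5
  rw [hl] at t3 hM
  generalize evalEval (x + l) m (p i k) = e1 at *
  generalize evalEval x l (p u (i + k)) = e2 at *
  generalize evalEval (-(l + m)) l (p u i) = e3 at *
  generalize evalEval (x + m) l (p u k) = e4 at *
  generalize evalEval x m (p i (u + k)) = e5 at *
  generalize evalEval x (l + m) (p (u + i) k) = e6 at *
  linear_combination r u * r i * r k * (-hJ) + r (u + i + k) * hM - r k * e6 * t3
    + r u * e2 * t1 + ModF s i k (x + l) m * t2 - r i * e5 * t4 - ModF s u k (x + m) l * t5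

theorem core (H : CoreData p S α β γ) : ∃ (s : ℂ) (r : ℤ → ℂ), (∀ i, S i) ∧ (∀ i, r i ≠ 0) ∧
    ∀ i j x y, r i * r j * evalEval x y (p i j) = r (i + j) * ModF s i j x y := by
  obtain ⟨g, hg0, hg, -⟩ := H.start
  have hα := H.hα
  obtain ⟨s, hs⟩ : ∃ s : ℂ, β = -3 * s * α := ⟨-β / (3 * α), by field_simp⟩
  have hgm : ∀ x y, evalEval x y (p (-1) 1) = -g := fun x y => by rw [H.skew, hg]
  have P := H.pos s g hs hg0 hg
  have P' := H.flip.pos s (-g) (by rw [hs]; ring) (neg_ne_zero.2 hg0)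
    (fun x y => by simpa using hgm x y)
  obtain ⟨-, -, -, -, -, -, hγ⟩ := P 1
  replace hγ := hγ le_rfl
  choose hS a c hac h1 h2 _ using P
  choose hS' a' c' hac' h1' h2' _ using P'
  have hαg : α * g ≠ 0 := mul_ne_zero hα hg0
  have ha : ∀ n, a n ≠ 0 := fun n => left_ne_zero_of_mul (by rw [hac]; exact hαg : a n * c n ≠ 0)
  have ha' : ∀ n, a' n ≠ 0 := fun n =>
    left_ne_zero_of_mul (by rw [hac', neg_mul_neg]; exact hαg : a' n * c' n ≠ 0)
  obtain ⟨ρ, hρ⟩ : ∃ ρ : ℂ, ρ * (α * g) = -1 := ⟨-1 / (α * g), by field_simp⟩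
  have hρ0 : ρ ≠ 0 := by rintro rfl; simp at hρ
  let R : ℕ → ℂ := fun n => Nat.rec 1 (fun n t => t * a n) n
  let R' : ℕ → ℂ := fun n => Nat.rec ρ (fun n t => -ρ * t * a' n) n
  have R0 : R 0 = 1 := rfl
  have Rs : ∀ n, R (n + 1) = R n * a n := fun n => rfl
  have R'0 : R' 0 = ρ := rfl
  have R's : ∀ n, R' (n + 1) = -ρ * R' n * a' n := fun n => rfl
  have Rn : ∀ n, R n ≠ 0 := by
    intro n
    induction n with
    | zero => rw [R0]; exact one_ne_zero
    | succ n ih => rw [Rs]; exact mul_ne_zero ih (ha n)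
  have R'n : ∀ n, R' n ≠ 0 := by
    intro n
    induction n with
    | zero => rw [R'0]; exact hρ0
    | succ n ih => rw [R's]; exact mul_ne_zero (mul_ne_zero (neg_ne_zero.2 hρ0) ih) (ha' n)
  let r : ℤ → ℂ := fun i => match i with
    | Int.ofNat 0 => ρ * g
    | Int.ofNat (n + 1) => R n
    | Int.negSucc n => R' n
  have r0 : r 0 = ρ * g := rfl
  have rp : ∀ n : ℕ, r (n + 1) = R n := fun n => rfl
  have rm : ∀ n : ℕ, r (-(n + 1)) = R' n := fun n => by
    rw [show (-((n : ℤ) + 1)) = Int.negSucc n by rw [Int.negSucc_eq]]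
  have r1 : r 1 = 1 := rfl
  have rm1 : r (-1) = ρ := rfl
  clear_value r R R'
  have cases : ∀ Q : ℤ → Prop, Q 0 → (∀ n : ℕ, Q (n + 1)) → (∀ n : ℕ, Q (-(n + 1))) →
      ∀ i, Q i := by
    intro Q q0 qp qm i
    rcases lt_trichotomy i 0 with h | h | h
    · obtain ⟨n, rfl⟩ : ∃ n : ℕ, i = -(n + 1) := ⟨(-i - 1).toNat, by omega⟩
      exact qm n
    · rw [h]; exact q0
    · obtain ⟨n, rfl⟩ : ∃ n : ℕ, i = n + 1 := ⟨(i - 1).toNat, by omega⟩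
      exact qp n
  have hr : ∀ i, r i ≠ 0 := by
    apply cases
    · rw [r0]; exact mul_ne_zero hρ0 hg0
    · intro n; rw [rp]; exact Rn n
    · intro n; rw [rm]; exact R'n n
  have hSall : ∀ i, S i := by
    apply cases
    · exact H.s0
    · rintro (_ | n)
      · simpa using H.s1
      · have := hS n
        rw [show ((n + 1 : ℕ) : ℤ) + 1 = n + 2 by push_cast; ring]
        exact this
    · rintro (_ | n)
      · simpa using H.sm
      · have := hS' n
        rw [show -(((n + 1 : ℕ) : ℤ) + 1) = -(n + 2) by push_cast; ring]
        exact this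
  have T0 : ∀ j x y, r 0 * r j * evalEval x y (p 0 j) = r (0 + j) * ModF s 0 j x y := by
    intro j x y
    rw [H.row0 j (hSall j), zero_add, ModF_zl s 0 j _ _ rfl, r0, hγ, hs]
    linear_combination r j * j * (y - s) * (y - 2 * s) * hρ
  have T1 : ∀ j x y, r 1 * r j * evalEval x y (p 1 j) = r (1 + j) * ModF s 1 j x y := by
    apply cases
    · intro x y
      rw [H.row_one_zero, add_zero, ModF_zr s 1 0 _ _ one_ne_zero rfl, r1, r0, hγ, hs]
      push_cast
      linear_combination - (x + y + s) * (x + y + 2 * s) * hρ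
    · intro n x y
      rw [h1, show (1 : ℤ) + (n + 1) = (n + 1 : ℕ) + 1 by push_cast; ring, rp, rp, Rs, r1,
        ModF_gen s 1 (n + 1) _ _ one_ne_zero (by omega) (by omega)]
      push_cast
      ring
    · rintro (_ | n) x y
      · have := hg x y
        norm_num
        rw [this, ModF_opp s 1 (-1) _ _ one_ne_zero (by norm_num), r1, rm1, r0]
        push_cast
        ring
      · have := h2' n x y
        simp only [neg_neg] at this
        rw [show (1 : ℤ) + -((n + 1 : ℕ) + 1) = -(n + 1) by push_cast; ring, rm, rm, r1, R's,
          ModF_gen s 1 _ _ _ one_ne_zero (by omega) (by omega),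
          show (-((n + 1 : ℕ) + 1) : ℤ) = -(n + 2) by push_cast; ring, this]
        push_cast
        linear_combination -ρ * R' n * (x - (n + 1) * y + s * (n + 3)) * hac' n
          - R' n * (x - (n + 1) * y + s * (n + 3)) * hρ
  have Tm : ∀ j x y, r (-1) * r j * evalEval x y (p (-1) j) = r (-1 + j) * ModF s (-1) j x y := by
    have hm1 : (-1 : ℤ) ≠ 0 := by norm_num
    apply cases
    · intro x y
      have := H.flip.row_one_zero x y
      simp only [neg_zero] at this
      rw [this, add_zero, ModF_zr s (-1) 0 _ _ hm1 rfl, r0, hγ, hs]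
      push_cast
      linear_combination r (-1) * (x + y + s) * (x + y + 2 * s) * hρ
    · rintro (_ | n) x y
      · have := hgm x y
        norm_num
        rw [this, ModF_opp s (-1) 1 _ _ hm1 (by norm_num), r1, rm1, r0]
        push_cast
        ring
      · rw [show (-1 : ℤ) + ((n + 1 : ℕ) + 1) = n + 1 by push_cast; ring, rp, rp, rm1, Rs,
          ModF_gen s (-1) _ _ _ hm1 (by omega) (by omega),
          show (((n + 1 : ℕ) + 1) : ℤ) = (n + 2) by push_cast; ring, h2]
        push_cast
        linear_combination ρ * R n * (x - (n + 1) * y + s * (n + 3)) * hac n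
          + R n * (x - (n + 1) * y + s * (n + 3)) * hρ
    · intro n x y
      rw [h1', show (-1 : ℤ) + -(n + 1) = -((n + 1 : ℕ) + 1) by push_cast; ring, rm, rm, R's, rm1,
        ModF_gen s (-1) _ _ _ hm1 (by omega) (by omega)]
      push_cast
      ring
  refine ⟨s, r, hSall, hr, ?_⟩
  apply cases
  · exact T0
  · intro n
    induction n with
    | zero => simpa using T1
    | succ n ih =>
      have := H.stepT s r hr 1 (n + 1) (by omega) (by omega) (by omega) T1 ih
      rw [show ((n + 1 : ℕ) : ℤ) + 1 = 1 + (n + 1) by push_cast; ring]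
      exact this
  · intro n
    induction n with
    | zero => simpa using Tm
    | succ n ih =>
      have := H.stepT s r hr (-1) (-(n + 1)) (by omega) (by omega) (by omega) Tm ih
      rw [show -(((n + 1 : ℕ) : ℤ) + 1) = -1 + -(n + 1) by push_cast; ring]
      exact this

end CoreData


namespace ClassV

variable {L : Type} [AddCommGroup L] [Module ℂ L]

theorem exists_core (C : ClassV L)
    (hmem₀ : ∀ n : ℕ, ((C.sp 0 1).coeff n).natDegree = 0)
    (hdeg₀ : (C.sp 0 1).natDegree = 2) :
    ∃ α β γ : ℂ, CoreData C.sp (fun i => C.G i ≠ ⊥) α β γ := by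
  have hz : ∀ i j : ℤ, (¬ C.G i ≠ ⊥ ∨ ¬ C.G j ≠ ⊥ ∨ ¬ C.G (i + j) ≠ ⊥) → C.sp i j = 0 := by
    intro i j h
    simp only [not_not] at h
    exact C.sp_zero i j h
  have hjac : ∀ (i j k : ℤ) (x l m : ℂ),
      evalEval (x + l) m (C.sp j k) * evalEval x l (C.sp i (j + k))
      = evalEval (-l - m) l (C.sp i j) * evalEval x (l + m) (C.sp (i + j) k)
        + evalEval (x + m) l (C.sp i k) * evalEval x m (C.sp j (i + k)) :=
    fun i j k x l m => C.toRankOneContext.E_jacobi i j k x l m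
  have hskew : ∀ (i j : ℤ) (x y : ℂ), evalEval x y (C.sp i j) = - evalEval x (-y - x) (C.sp j i) :=
    fun i j x y => C.toRankOneContext.E_skew i j x y
  obtain ⟨α, hα⟩ := natDegree_eq_zero.1 (hmem₀ 2)
  obtain ⟨β, hβ⟩ := natDegree_eq_zero.1 (hmem₀ 1)
  obtain ⟨γ, hγ⟩ := natDegree_eq_zero.1 (hmem₀ 0)
  have h01 : ∀ x l, evalEval x l (C.sp 0 1) = α * l ^ 2 + β * l + γ := by
    intro x l
    unfold evalEval
    rw [eval_eq_sum_range (p := C.sp 0 1), hdeg₀]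
    simp [Finset.sum_range_succ, ← hα, ← hβ, ← hγ]
    ring
  have hα0 : α ≠ 0 := by
    intro h0
    have h1 : (C.sp 0 1).coeff 2 = 0 := by rw [← hα, h0, Polynomial.C_0]
    have h2 : (C.sp 0 1).leadingCoeff = 0 := by rw [leadingCoeff, hdeg₀, h1]
    exact C.ne_01 (leadingCoeff_eq_zero.1 h2)
  have h00 : C.sp 0 0 = 0 := by
    ext1 n
    have h1 := C.toRankOneContext.sp_brkt' 0 0 n
    rw [C.abelian0 n _ (C.bas_mem 0) _ (C.bas_mem 0)] at h1
    have h2 := (smul_eq_zero.1 h1.symm).resolve_left (by exact_mod_cast n.factorial_ne_zero)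
    rw [coeff_zero]
    exact C.toRankOneContext.poly_inj0 (0 + 0) (by simpa using C.supp_zero) _ h2
  have h0m : ∀ x l, evalEval x l (C.sp 0 (-1)) = -(α * l ^ 2 + β * l + γ) := by
    intro x l
    obtain ⟨y, hy⟩ : ∃ y : ℂ, (C.sp (-1) 1).map (evalRingHom y) ≠ 0 := by
      by_contra hc
      push Not at hc
      apply C.ne_m11
      apply aux_ext
      intro x y
      rw [aux_evalEval_map, hc]
      simp
    have key := aux_shift (((C.sp 0 (-1)).eval (Polynomial.C l)).comp (-X - Polynomial.C l))
      ((C.sp (-1) 1).map (evalRingHom y)) (-(α * l ^ 2 + β * l + γ)) l hy (by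
        intro m
        have hJ := hjac 0 (-1) 1 y l m
        have e0 : C.sp 0 ((-1) + 1) = 0 := by simpa using h00
        rw [e0, h01, zero_add, zero_add] at hJ
        rw [← aux_evalEval_map, ← aux_evalEval_map, add_comm m l, eval_comp]
        simp only [eval_sub, eval_neg, eval_X, eval_C]
        rw [show -m - l = -l - m by ring]
        unfold evalEval at hJ ⊢
        rw [eval_zero, eval_zero, mul_zero] at hJ
        linear_combination -hJ) (-x - l)
    rw [eval_comp] at key
    simp only [eval_sub, eval_neg, eval_X, eval_C] at key
    rw [← key]
    unfold evalEval
    congr 1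
    ring
  refine ⟨α, β, γ, hα0, hjac, hskew, hz, ?_, C.supp_zero, C.supp_one, C.supp_negone, ?_⟩
  · intro i hi
    refine C.gen_induction
      (fun i => ∀ x l : ℂ, evalEval x l (C.sp 0 i) = i * (α * l ^ 2 + β * l + γ)) ?_ ?_ ?_ ?_ i hi
    · intro x l; rw [h01]; push_cast; ring
    · intro x l; rw [h00]; simp
    · intro x l; rw [h0m]; push_cast; ring
    · intro i j hi hj hne x l
      have := aux_lead (C.sp i j) hne ((C.sp 0 (i + j)).eval (Polynomial.C l))
        (i * (α * l ^ 2 + β * l + γ)) (j * (α * l ^ 2 + β * l + γ)) l (by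
          intro x m
          have hJ := hjac 0 i j x l m
          rw [hi, hj, zero_add, zero_add] at hJ
          rw [← hJ, mul_comm]) x
      unfold evalEval
      rw [this]
      push_cast
      ring
  · intro h
    apply C.ne_m11
    apply aux_ext
    intro x y
    rw [hskew, h]
    simp

theorem eval_pSCL2 (s : ℂ) (i j : ℤ) (x y : ℂ) :
    evalEval x y (pSCL2 0 s i j) = ModF s i j x y := by
  unfold pSCL2 ModF pCL2 Pc Pd Pl evalEval
  have e1 : ((i : ℂ) = -(2 * 0)) ↔ i = 0 := by simp
  have e2 : ((j : ℂ) = -(2 * 0)) ↔ j = 0 := by simp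
  have e3 : ((i : ℂ) + (j : ℂ) = -(2 * 0)) ↔ i + j = 0 := by
    rw [mul_zero, neg_zero]; exact_mod_cast Iff.rfl
  simp only [e1, e2, e3]
  split_ifs <;> simp

theorem isBasis (C : ClassV L) (hS : ∀ i, C.G i ≠ ⊥) (r : ℤ → ℂ) (hr : ∀ i, r i ≠ 0) :
    C.toLieConformalAlgebra.IsFreePolyBasis (fun i => r i • C.bas i) := by
  have hmem : ∀ i (k : ℕ), (⇑C.D)^[k] (r i • C.bas i) = r i • (⇑C.D)^[k] (C.bas i) := by
    intro i k
    rw [← Module.End.pow_apply, ← Module.End.pow_apply, map_smul]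
  have hin : ∀ i (k : ℕ), (⇑C.D)^[k] (r i • C.bas i) ∈ C.G i := by
    intro i k
    induction k with
    | zero => exact (C.G i).smul_mem _ (C.bas_mem i)
    | succ k ih => rw [Function.iterate_succ_apply']; exact C.dGrade i _ ih
  have hli : ∀ i, LinearIndependent ℂ (fun k : ℕ => (⇑C.D)^[k] (r i • C.bas i)) := by
    intro i
    have := (C.bas_indep i (hS i)).units_smul (fun _ => Units.mk0 (r i) (hr i))
    convert this using 1
    ext k
    rw [hmem]
    rfl
  have hsp : ∀ i, C.G i ≤ Submodule.span ℂ (Set.range fun k : ℕ => (⇑C.D)^[k] (r i • C.bas i)) := by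
    intro i
    rw [C.bas_span i (hS i), Submodule.span_le]
    rintro _ ⟨k, rfl⟩
    have h1 : (⇑C.D)^[k] (C.bas i) = (r i)⁻¹ • (⇑C.D)^[k] (r i • C.bas i) := by
      rw [hmem, smul_smul, inv_mul_cancel₀ (hr i), one_smul]
    simp only [SetLike.mem_coe]
    rw [h1]
    exact Submodule.smul_mem _ _ (Submodule.subset_span ⟨k, rfl⟩)
  let b : ∀ i, Module.Basis ℕ ℂ (C.G i) := fun i =>
    Module.Basis.mk (v := fun k : ℕ => (⟨(⇑C.D)^[k] (r i • C.bas i), hin i k⟩ : C.G i))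
      (LinearIndependent.of_comp (C.G i).subtype (hli i)) (by
        rintro ⟨x, hx⟩ -
        have h2 := hsp i hx
        have h3 : (Submodule.span ℂ (Set.range fun k : ℕ =>
            (⟨(⇑C.D)^[k] (r i • C.bas i), hin i k⟩ : C.G i))).map (C.G i).subtype
            = Submodule.span ℂ (Set.range fun k : ℕ => (⇑C.D)^[k] (r i • C.bas i)) := by
          rw [Submodule.map_span, ← Set.range_comp]
          rfl
        rw [← h3] at h2
        obtain ⟨y, hy, hyx⟩ := h2
        have : y = ⟨x, hx⟩ := Subtype.ext hyx
        rw [← this]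
        exact hy)
  let B := (C.internal.collectedBasis b).reindex (Equiv.sigmaEquivProd ℤ ℕ)
  have hB : ⇑B = fun q : ℤ × ℕ => (⇑C.D)^[q.2] (r q.1 • C.bas q.1) := by
    ext q
    simp [B, b, DirectSum.IsInternal.collectedBasis_coe]
  constructor
  · have := B.linearIndependent
    rw [hB] at this
    exact this
  · have := B.span_eq
    rw [hB] at this
    exact this

theorem main_aux (C : ClassV L)
    (hmem₀ : ∀ n : ℕ, ((C.sp 0 1).coeff n).natDegree = 0)
    (hdeg₀ : (C.sp 0 1).natDegree = 2) :
    ∃ s : ℂ, C.toLieConformalAlgebra.IsSCL2 0 s := by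
  obtain ⟨α, β, γ, H⟩ := C.exists_core hmem₀ hdeg₀
  obtain ⟨s, r, hS, hr, hT⟩ := H.core
  refine ⟨s, fun i => r i • C.bas i, C.isBasis hS r hr, fun i j n => ?_⟩
  have hpoly : Pc (r i * r j) * C.sp i j = Pc (r (i + j)) * pSCL2 0 s i j := by
    apply aux_ext
    intro x y
    have := hT i j x y
    rw [← eval_pSCL2] at this
    unfold Pc
    unfold evalEval at *
    simpa using this
  have hc := congrArg (fun q => coeff q n) hpoly
  unfold Pc at hc
  simp only [coeff_C_mul] at hc
  have hd := congrArg (fun q => aeval C.D q (C.bas (i + j))) hc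
  simp only [← smul_eq_C_mul, map_smul, LinearMap.smul_apply] at hd
  rw [LieConformalAlgebra.aux_applyP, map_smul, map_smul, LinearMap.smul_apply, map_smul,
    C.toRankOneContext.sp_brkt', ← hd]
  simp only [smul_smul]
  congr 1
  ring

end ClassV

/-- a class `𝒱` algebra with `deg p_{0,1}(λ) = 2` is isomorphic
to `SCL₂(0,s)` for some `s ∈ ℂ`. -/
theorem classV_deg_two_SCL2
    {L : Type} [AddCommGroup L] [Module ℂ L] (C : ClassV L)
    (hmem₀ : ∀ n : ℕ, ((C.sp 0 1).coeff n).natDegree = 0)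
    (hdeg₀ : (C.sp 0 1).natDegree = 2) :
    ∃ s : ℂ, C.toLieConformalAlgebra.IsSCL2 0 s := by
  exact C.main_aux hmem₀ hdeg₀
end
end
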